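/- arXiv:2604.05304 — 7 statements merged into one kernel-verified Lean document; each statement's English description precedes it below -/
import Mathlib

section
/- Let n be a positive integer and p a prime such that p^p divides n, and let r with 0 ≤ r < p be the remainder when τ(n) is divided by p. If τ(n) > r(p+1), then n is not matchable. -/
/-!
Let `C` be the set of divisors of `n` coprime to `p`. The numbers `p ^ i * d` with `i ≤ p` and
`d ∈ C` are distinct divisors of `n`, so `(p + 1) * |C| ≤ τ(n)`. In a matching, each of the
`q = ⌊τ(n) / p⌋` multiples of `p` in `{1, ..., τ(n)}` is the image of an element of `C`, so
`q ≤ |C|`. Hence `(p + 1) * q ≤ τ(n) = p * q + r`, so `q ≤ r` and `τ(n) ≤ r * (p + 1)`.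
-/

/-- A positive integer `n` is matchable if there is a bijection `ψ` from the set of
divisors of `n` to `{1, 2, ..., τ(n)}` with `gcd(d, ψ(d)) = 1` for every divisor `d`. -/
def Matchable (n : ℕ) : Prop :=
  ∃ ψ : ℕ → ℕ, Set.BijOn ψ ↑n.divisors ↑(Finset.Icc 1 n.divisors.card) ∧
    ∀ d ∈ n.divisors, Nat.gcd d (ψ d) = 1

open Finset

theorem le_of_pow_mul_eq_pow_mul_of_coprime {k i j c d : ℕ} (hk : 1 < k) (hd : d.Coprime k)
    (h : k ^ i * c = k ^ j * d) : i ≤ j := by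
  have hdvd : k ^ i ∣ k ^ j * d := h ▸ dvd_mul_right ..
  exact (Nat.pow_dvd_pow_iff_le_right hk).1 ((hd.symm.pow_left i).dvd_of_dvd_mul_right hdvd)

theorem injOn_pow_mul_coprime {k : ℕ} (hk : 1 < k) :
    Set.InjOn (fun x : ℕ × ℕ ↦ k ^ x.1 * x.2) {x | x.2.Coprime k} := by
  rintro ⟨i, c⟩ (hc : c.Coprime k) ⟨j, d⟩ (hd : d.Coprime k) (h : k ^ i * c = k ^ j * d)
  obtain rfl : i = j := le_antisymm (le_of_pow_mul_eq_pow_mul_of_coprime hk hd h)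
    (le_of_pow_mul_eq_pow_mul_of_coprime hk hc h.symm)
  rw [Nat.eq_of_mul_eq_mul_left (by positivity) h]

theorem mul_card_coprime_divisors_le {k e n : ℕ} (hk : 1 < k) (hkn : k ^ e ∣ n) :
    (e + 1) * #{d ∈ n.divisors | d.Coprime k} ≤ #n.divisors := by
  rw [← card_range (e + 1), ← card_product]
  refine card_le_card_of_injOn (fun x ↦ k ^ x.1 * x.2) ?_
    ((injOn_pow_mul_coprime hk).mono ?_)
  · rintro ⟨i, d⟩ hid
    obtain ⟨hi, ⟨hdn, hn⟩, hd⟩ : i < e + 1 ∧ (d ∣ n ∧ n ≠ 0) ∧ d.Coprime k := by simpa using hid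
    have hprod : k ^ e * d ∣ n := (hd.symm.pow_left e).mul_dvd_of_dvd_of_dvd hkn hdn
    have hpow : k ^ i ∣ k ^ e := pow_dvd_pow k (Nat.lt_succ_iff.1 hi)
    exact Nat.mem_divisors.2 ⟨(mul_dvd_mul_right hpow d).trans hprod, hn⟩
  · intro x hx
    exact (mem_filter.1 (mem_product.1 hx).2).2

theorem div_le_card_coprime_of_surjOn {ψ : ℕ → ℕ} {s : Finset ℕ} {N : ℕ}
    (hψ : Set.SurjOn ψ s (Icc 1 N)) (hcop : ∀ d ∈ s, d.Coprime (ψ d)) (k : ℕ) :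
    N / k ≤ #{d ∈ s | d.Coprime k} := by
  rw [← Nat.Ioc_filter_dvd_card_eq_div]
  refine card_le_card_of_surjOn ψ fun m hm ↦ ?_
  obtain ⟨hmN, hkm⟩ := mem_filter.1 hm
  obtain ⟨d, hd, rfl⟩ := hψ (mem_Icc.2 (mem_Ioc.1 hmN))
  exact ⟨d, mem_filter.2 ⟨hd, (hcop d hd).coprime_dvd_right hkm⟩, rfl⟩

theorem Matchable.mul_card_divisors_div_le {k e n : ℕ} (hn : Matchable n) (hk : 1 < k)
    (hkn : k ^ e ∣ n) : (e + 1) * (#n.divisors / k) ≤ #n.divisors := by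
  obtain ⟨ψ, hψ, hcop⟩ := hn
  calc (e + 1) * (#n.divisors / k)
      ≤ (e + 1) * #{d ∈ n.divisors | d.Coprime k} := by
        gcongr
        exact div_le_card_coprime_of_surjOn hψ.surjOn hcop k
    _ ≤ #n.divisors := mul_card_coprime_divisors_le hk hkn

theorem stmt_0_general {n p r : ℕ} (hp : 1 < p) (hdvd : p ^ p ∣ n)
    (hr : r = #n.divisors % p) (h : #n.divisors > r * (p + 1)) : ¬ Matchable n := by
  intro hn
  have hle : (p + 1) * (#n.divisors / p) ≤ #n.divisors := hn.mul_card_divisors_div_le hp hdvd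
  have hdiv : p * (#n.divisors / p) + r = #n.divisors := hr ▸ Nat.div_add_mod ..
  have hqr : #n.divisors / p ≤ r := by linarith
  refine h.not_ge ?_
  calc #n.divisors = p * (#n.divisors / p) + r := hdiv.symm
    _ ≤ p * r + r := by gcongr
    _ = r * (p + 1) := by ring

theorem stmt_0 (n p r : ℕ) (hn : 0 < n) (hp : p.Prime) (hdvd : p ^ p ∣ n)
    (hr : r = n.divisors.card % p) (h : n.divisors.card > r * (p + 1)) :
    ¬ Matchable n :=
  stmt_0_general hp.one_lt hdvd hr h
end

section
/- If p is a prime with p^p dividing the positive integer n, and τ(n) ≥ p², then n is not matchable. -/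
lemma Matchable.card_divisors_div_le_card_filter_coprime {n : ℕ} (hn : Matchable n) (q : ℕ) :
    n.divisors.card / q ≤ (n.divisors.filter q.Coprime).card := by
  obtain ⟨ψ, hψ, hcop⟩ := hn
  rw [← Nat.Ioc_filter_dvd_card_eq_div, ← Finset.Icc_add_one_left_eq_Ioc]
  refine Finset.card_le_card_of_surjOn ψ fun k hk ↦ ?_
  obtain ⟨hk, hqk⟩ := Finset.mem_filter.mp hk
  obtain ⟨d, hd, rfl⟩ := hψ.surjOn hk
  have hqd : q.Coprime d := (Nat.Coprime.coprime_dvd_right hqk (hcop d hd)).symm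
  exact ⟨d, Finset.mem_filter.mpr ⟨hd, hqd⟩, rfl⟩

lemma injOn_pow_mul_of_coprime {q : ℕ} (hq : 1 < q) :
    Set.InjOn (fun x : ℕ × ℕ ↦ q ^ x.1 * x.2) {x | q.Coprime x.2} := by
  have exponent_le {i j d e : ℕ} (he : q.Coprime e) (h : q ^ i * d = q ^ j * e) : i ≤ j := by
    have hdvd : q ^ i ∣ q ^ j * e := h ▸ dvd_mul_right (q ^ i) d
    exact (Nat.pow_dvd_pow_iff_le_right hq).mp ((he.pow_left i).dvd_of_dvd_mul_right hdvd)
  rintro ⟨i, d⟩ hd ⟨j, e⟩ he h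
  obtain rfl : i = j := (exponent_le he h).antisymm (exponent_le hd h.symm)
  obtain rfl : d = e := Nat.eq_of_mul_eq_mul_left (by positivity) h
  rfl

lemma succ_mul_card_filter_coprime_le_card_divisors {n q a : ℕ} (hq : 1 < q) (ha : q ^ a ∣ n) :
    (a + 1) * (n.divisors.filter q.Coprime).card ≤ n.divisors.card := by
  rw [← Finset.card_range (a + 1), ← Finset.card_product]
  refine Finset.card_le_card_of_injOn (fun x ↦ q ^ x.1 * x.2) ?_
    ((injOn_pow_mul_of_coprime hq).mono ?_)
  · rintro ⟨i, d⟩ hx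
    obtain ⟨hi, hd⟩ := Finset.mem_product.mp hx
    obtain ⟨hd, hqd⟩ := Finset.mem_filter.mp hd
    have hin : q ^ i ∣ n := (pow_dvd_pow q (Finset.mem_range_succ_iff.mp hi)).trans ha
    exact Nat.mem_divisors.mpr ⟨(hqd.pow_left i).mul_dvd_of_dvd_of_dvd hin
      (Nat.dvd_of_mem_divisors hd), Nat.ne_zero_of_mem_divisors hd⟩
  · exact fun x hx ↦ (Finset.mem_filter.mp (Finset.mem_product.mp hx).2).2

theorem stmt_1_general {n q : ℕ} (hq : 1 < q) (hdvd : q ^ q ∣ n) (h : q ^ 2 ≤ n.divisors.card) :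
    ¬ Matchable n := by
  intro hn
  set c := (n.divisors.filter q.Coprime).card
  have upper : n.divisors.card < (c + 1) * q :=
    Nat.lt_mul_of_div_lt
      (Nat.lt_succ_of_le (hn.card_divisors_div_le_card_filter_coprime q)) (by positivity)
  have lower : (q + 1) * c ≤ n.divisors.card :=
    succ_mul_card_filter_coprime_le_card_divisors hq hdvd
  have hqc : q < c + 1 := Nat.lt_of_mul_lt_mul_right (sq q ▸ h.trans_lt upper)
  have hcq : c < q := by linarith
  omega

theorem stmt_1 (n p : ℕ) (hn : 0 < n) (hp : p.Prime) (hdvd : p ^ p ∣ n)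
    (h : n.divisors.card ≥ p ^ 2) :
    ¬ Matchable n :=
  stmt_1_general hp.one_lt hdvd h
end

section
/- The upper asymptotic density of the set of matchable positive integers is at most α, i.e., limsup_{x→∞} #{n ≤ x : n is matchable}/x ≤ α. -/
/-- `α = ∏_p (1 - p^{-p})`, the product over all primes `p`. -/
noncomputable def alphaConst : ℝ :=
  ∏' p : Nat.Primes, (1 - 1 / ((p : ℕ) : ℝ) ^ (p : ℕ))

section Density

open Filter Topology

variable {A B : Set ℕ} {d e : ℝ}

/-- The proportion of the integers `1, …, x` that lie in `A`; its value at `x = 0` is `0`. -/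
noncomputable def partialDensity (A : Set ℕ) (x : ℕ) : ℝ :=
  (A ∩ Set.Icc 1 x).ncard / x

/-- `A` has natural (asymptotic) density `d`. -/
def HasDensity (A : Set ℕ) (d : ℝ) : Prop :=
  Tendsto (partialDensity A) atTop (𝓝 d)

/-- The upper asymptotic density of `A`. -/
noncomputable def upperDensity (A : Set ℕ) : ℝ :=
  limsup (partialDensity A) atTop

theorem partialDensity_setOf (P : ℕ → Prop) [DecidablePred P] (x : ℕ) :
    partialDensity {n | P n} x = ((Finset.Icc 1 x).filter P).card / x := by
  rw [partialDensity, ← Set.ncard_coe_finset, Finset.coe_filter]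
  congr 3
  grind

theorem partialDensity_nonneg (A : Set ℕ) (x : ℕ) : 0 ≤ partialDensity A x := by
  unfold partialDensity
  positivity

theorem partialDensity_mono (h : A ⊆ B) (x : ℕ) : partialDensity A x ≤ partialDensity B x := by
  unfold partialDensity
  gcongr
  exact Set.toFinite _

theorem partialDensity_univ {x : ℕ} (hx : x ≠ 0) : partialDensity Set.univ x = 1 := by
  simp [partialDensity, Set.ncard_eq_toFinset_card', hx]

theorem partialDensity_le_one (A : Set ℕ) (x : ℕ) : partialDensity A x ≤ 1 := by
  obtain rfl | hx := eq_or_ne x 0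
  · simp [partialDensity]
  · exact (partialDensity_mono A.subset_univ x).trans_eq (partialDensity_univ hx)

theorem partialDensity_union_le (A B : Set ℕ) (x : ℕ) :
    partialDensity (A ∪ B) x ≤ partialDensity A x + partialDensity B x := by
  simp only [partialDensity, Set.union_inter_distrib_right, ← add_div]
  gcongr
  exact_mod_cast Set.ncard_union_le _ _

theorem partialDensity_sdiff (h : B ⊆ A) (x : ℕ) :
    partialDensity (A \ B) x = partialDensity A x - partialDensity B x := by
  have hsub : B ∩ Set.Icc 1 x ⊆ A ∩ Set.Icc 1 x := Set.inter_subset_inter_left _ h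
  rw [partialDensity, Set.inter_sdiff_distrib_right, Set.cast_ncard_sdiff hsub (Set.toFinite _),
    sub_div, partialDensity, partialDensity]

theorem partialDensity_image_mul_left {a : ℕ} (ha : a ≠ 0) (A : Set ℕ) (x : ℕ) :
    partialDensity ((a * ·) '' A) x = partialDensity A (x / a) * (((x / a : ℕ) : ℝ) / x) := by
  have hpreimage : (a * ·) ⁻¹' Set.Icc 1 x = Set.Icc 1 (x / a) := by
    ext m
    simp [Nat.le_div_iff_mul_le (Nat.pos_of_ne_zero ha), Nat.one_le_iff_ne_zero, ha, mul_comm]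
  rw [partialDensity, ← Set.image_inter_preimage, hpreimage,
    Set.ncard_image_of_injective _ (mul_right_injective₀ ha), partialDensity]
  obtain hx | hx := eq_or_ne (x / a) 0
  · simp [hx]
  · field_simp

theorem isBoundedUnder_le_partialDensity (A : Set ℕ) :
    IsBoundedUnder (· ≤ ·) atTop (partialDensity A) :=
  isBoundedUnder_of ⟨1, partialDensity_le_one A⟩

theorem isBoundedUnder_ge_partialDensity (A : Set ℕ) :
    IsBoundedUnder (· ≥ ·) atTop (partialDensity A) :=
  isBoundedUnder_of ⟨0, partialDensity_nonneg A⟩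

theorem upperDensity_mono (h : A ⊆ B) : upperDensity A ≤ upperDensity B :=
  limsup_le_limsup (.of_forall (partialDensity_mono h))
    (isBoundedUnder_ge_partialDensity A).isCoboundedUnder_le (isBoundedUnder_le_partialDensity B)

theorem upperDensity_union_le (A B : Set ℕ) :
    upperDensity (A ∪ B) ≤ upperDensity A + upperDensity B :=
  calc limsup (partialDensity (A ∪ B)) atTop
      ≤ limsup (partialDensity A + partialDensity B) atTop :=
        limsup_le_limsup (.of_forall (partialDensity_union_le A B))
          (isBoundedUnder_ge_partialDensity _).isCoboundedUnder_le
          (isBoundedUnder_le_add (isBoundedUnder_le_partialDensity A)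
            (isBoundedUnder_le_partialDensity B))
    _ ≤ upperDensity A + upperDensity B :=
        limsup_add_le (isBoundedUnder_ge_partialDensity A) (isBoundedUnder_le_partialDensity A)
          (isBoundedUnder_ge_partialDensity B).isCoboundedUnder_le
          (isBoundedUnder_le_partialDensity B)

theorem HasDensity.upperDensity_eq (h : HasDensity A d) : upperDensity A = d :=
  h.limsup_eq

theorem hasDensity_zero_of_upperDensity_le (h : upperDensity A ≤ 0) : HasDensity A 0 :=
  tendsto_of_le_liminf_of_limsup_le
    (le_liminf_of_le (isBoundedUnder_le_partialDensity A).isCoboundedUnder_ge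
      (.of_forall (partialDensity_nonneg A)))
    h (isBoundedUnder_le_partialDensity A) (isBoundedUnder_ge_partialDensity A)

theorem hasDensity_univ : HasDensity Set.univ 1 :=
  tendsto_const_nhds.congr' <| (eventually_ne_atTop 0).mono fun _ hx ↦ (partialDensity_univ hx).symm

theorem hasDensity_zero_of_finite (hA : A.Finite) : HasDensity A 0 := by
  refine squeeze_zero (partialDensity_nonneg A) (fun x ↦ ?_)
    (tendsto_const_div_atTop_nhds_zero_nat (A.ncard : ℝ))
  unfold partialDensity
  gcongr
  exact Set.inter_subset_left

theorem HasDensity.sdiff (hA : HasDensity A d) (hB : HasDensity B e) (h : B ⊆ A) :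
    HasDensity (A \ B) (d - e) :=
  (Tendsto.sub hA hB).congr fun x ↦ (partialDensity_sdiff h x).symm

theorem HasDensity.image_mul_left {a : ℕ} (ha : a ≠ 0) (hA : HasDensity A d) :
    HasDensity ((a * ·) '' A) (d / a) := by
  have hdiv : Tendsto (fun x : ℕ ↦ ((x / a : ℕ) : ℝ) / x) atTop (𝓝 (a : ℝ)⁻¹) := by
    have hfloor := (tendsto_nat_floor_mul_div_atTop (R := ℝ) (a := (a : ℝ)⁻¹) (by positivity)).comp
      tendsto_natCast_atTop_atTop
    refine hfloor.congr fun x ↦ ?_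
    simp [← Nat.floor_div_eq_div (K := ℝ), div_eq_inv_mul]
  rw [div_eq_mul_inv]
  exact ((hA.comp (Nat.tendsto_div_const_atTop ha)).mul hdiv).congr fun x ↦
    (partialDensity_image_mul_left ha A x).symm

theorem HasDensity.union_zero (hA : HasDensity A 0) (hB : HasDensity B 0) :
    HasDensity (A ∪ B) 0 :=
  hasDensity_zero_of_upperDensity_le <| by
    simpa [hA.upperDensity_eq, hB.upperDensity_eq] using upperDensity_union_le A B

theorem hasDensity_biUnion_zero {ι : Type*} (T : Finset ι) {A : ι → Set ℕ}
    (h : ∀ i ∈ T, HasDensity (A i) 0) : HasDensity (⋃ i ∈ T, A i) 0 := by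
  classical
  induction T using Finset.induction_on with
  | empty => exact hasDensity_zero_of_finite (by simp)
  | insert j T _ ih =>
    rw [Finset.set_biUnion_insert]
    exact (h j (T.mem_insert_self j)).union_zero (ih fun i hi ↦ h i (Finset.mem_insert_of_mem hi))

end Density

section Sieve

variable {ι : Type*} {a : ι → ℕ} {S : Finset ι}

/-- The integers that survive the sieve by the moduli `a i`, `i ∈ S`. -/
def siftedSet (a : ι → ℕ) (S : Finset ι) : Set ℕ :=
  {n | ∀ i ∈ S, ¬ a i ∣ n}

theorem notMem_siftedSet {n : ℕ} : n ∉ siftedSet a S ↔ ∃ i ∈ S, a i ∣ n := by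
  simp [siftedSet]

theorem image_mul_left_siftedSet_subset {b : ℕ} (hb : ∀ i ∈ S, (a i).Coprime b) :
    (b * ·) '' siftedSet a S ⊆ siftedSet a S := by
  rintro _ ⟨m, hm, rfl⟩ i hi hdvd
  exact hm i hi ((hb i hi).dvd_of_dvd_mul_left hdvd)

theorem siftedSet_insert [DecidableEq ι] (a : ι → ℕ) (S : Finset ι) (j : ι) :
    siftedSet a (insert j S) = siftedSet a S \ (a j * ·) '' siftedSet a S := by
  ext n
  simp only [siftedSet, Finset.forall_mem_insert, Set.mem_ofPred_eq, Set.mem_sdiff, Set.mem_image]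
  constructor
  · rintro ⟨hj, hS⟩
    exact ⟨hS, fun ⟨m, _, hm⟩ ↦ hj ⟨m, hm.symm⟩⟩
  · rintro ⟨hS, hj⟩
    refine ⟨?_, hS⟩
    rintro ⟨m, rfl⟩
    exact hj ⟨m, fun i hi hdvd ↦ hS i hi (hdvd.mul_left _), rfl⟩

theorem hasDensity_siftedSet (h0 : ∀ i ∈ S, a i ≠ 0)
    (hcop : (S : Set ι).Pairwise (Function.onFun Nat.Coprime a)) :
    HasDensity (siftedSet a S) (∏ i ∈ S, (1 - 1 / (a i : ℝ))) := by
  classical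
  induction S using Finset.induction_on with
  | empty => simpa [siftedSet] using hasDensity_univ
  | insert j S hj ih =>
    have hS := ih (fun i hi ↦ h0 i (Finset.mem_insert_of_mem hi)) (hcop.mono (by simp))
    rw [siftedSet_insert, Finset.prod_insert hj, one_sub_mul, one_div_mul_eq_div]
    exact hS.sdiff (hS.image_mul_left (h0 j (S.mem_insert_self j)))
      (image_mul_left_siftedSet_subset fun i hi ↦
        hcop (by simp [hi]) (by simp) (ne_of_mem_of_not_mem hi hj))

theorem upperDensity_le_prod_of_subset_siftedSet_union {A N : Set ℕ} (h0 : ∀ i ∈ S, a i ≠ 0)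
    (hcop : (S : Set ι).Pairwise (Function.onFun Nat.Coprime a)) (hN : HasDensity N 0)
    (hA : A ⊆ siftedSet a S ∪ N) : upperDensity A ≤ ∏ i ∈ S, (1 - 1 / (a i : ℝ)) :=
  calc upperDensity A
      ≤ upperDensity (siftedSet a S) + upperDensity N :=
        (upperDensity_mono hA).trans (upperDensity_union_le _ _)
    _ = ∏ i ∈ S, (1 - 1 / (a i : ℝ)) := by
        rw [(hasDensity_siftedSet h0 hcop).upperDensity_eq, hN.upperDensity_eq, add_zero]

end Sieve

section FewDivisors

open Filter Topology

theorem tendsto_prod_one_sub_atTop_zero {ι : Type*} {f : ι → ℝ} (h0 : ∀ i, 0 ≤ f i)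
    (h1 : ∀ i, f i ≤ 1) (hf : ¬ Summable f) :
    Tendsto (fun s : Finset ι ↦ ∏ i ∈ s, (1 - f i)) atTop (𝓝 0) := by
  have hsum : Tendsto (fun s : Finset ι ↦ ∑ i ∈ s, f i) atTop atTop := by
    refine tendsto_atTop_atTop_of_monotone
      (fun _ _ hst ↦ Finset.sum_le_sum_of_subset_of_nonneg hst fun i _ _ ↦ h0 i) fun c ↦ ?_
    by_contra! hc
    exact hf (summable_of_sum_le h0 fun s ↦ (hc s).le)
  refine squeeze_zero (fun s ↦ Finset.prod_nonneg fun i _ ↦ sub_nonneg.2 (h1 i)) (fun s ↦ ?_)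
    (Real.tendsto_exp_neg_atTop_nhds_zero.comp hsum)
  calc ∏ i ∈ s, (1 - f i)
      ≤ ∏ i ∈ s, Real.exp (-f i) :=
        Finset.prod_le_prod (fun i _ ↦ sub_nonneg.2 (h1 i)) fun i _ ↦ Real.one_sub_le_exp_neg _
    _ = Real.exp (-∑ i ∈ s, f i) := by rw [← Real.exp_sum, Finset.sum_neg_distrib]

theorem tendsto_prod_primes_one_sub_one_div_atTop_zero :
    Tendsto (fun T : Finset Nat.Primes ↦ ∏ p ∈ T, (1 - 1 / (p : ℝ))) atTop (𝓝 0) :=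
  tendsto_prod_one_sub_atTop_zero (fun p ↦ by positivity)
    (fun p ↦ div_le_one_of_le₀ (by exact_mod_cast p.2.one_lt.le) (by positivity))
    Nat.Primes.not_summable_one_div

theorem pairwise_coprime_primes (s : Set Nat.Primes) :
    s.Pairwise (Function.onFun Nat.Coprime fun p ↦ (p : ℕ)) :=
  fun p _ q _ hpq ↦ (Nat.coprime_primes p.2 q.2).2 (Nat.Primes.coe_nat_injective.ne hpq)

theorem card_divisors_lt_card_divisors_mul {p m : ℕ} (hp : 1 < p) (hm : m ≠ 0) :
    m.divisors.card < (p * m).divisors.card := by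
  have hpm : p * m ≠ 0 := by positivity
  have hsub : m.divisors ⊆ (p * m).divisors := Nat.divisors_subset_of_dvd hpm (dvd_mul_left m p)
  have hnotMem : p * m ∉ m.divisors := fun h ↦
    (Nat.divisor_le h).not_gt (lt_mul_left (Nat.pos_of_ne_zero hm) hp)
  exact Finset.card_lt_card <|
    (Finset.ssubset_iff_of_subset hsub).2 ⟨p * m, Nat.mem_divisors_self _ hpm, hnotMem⟩

theorem card_divisors_le_succ_subset (k : ℕ) (T : Finset Nat.Primes) :
    {n : ℕ | n.divisors.card ≤ k + 1} ⊆ siftedSet (fun p : Nat.Primes ↦ (p : ℕ)) T ∪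
      ⋃ p ∈ T, ((p : ℕ) * ·) '' {m : ℕ | m.divisors.card ≤ k} := by
  intro n hn
  refine or_iff_not_imp_left.2 fun hsifted ↦ ?_
  obtain ⟨p, hpT, m, rfl⟩ := notMem_siftedSet.1 hsifted
  refine Set.mem_biUnion hpT ⟨m, ?_, rfl⟩
  obtain rfl | hm := eq_or_ne m 0
  · simp
  · exact Nat.le_of_lt_succ ((card_divisors_lt_card_divisors_mul p.2.one_lt hm).trans_le hn)

theorem hasDensity_card_divisors_le (k : ℕ) : HasDensity {n : ℕ | n.divisors.card ≤ k} 0 := by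
  induction k with
  | zero => exact hasDensity_zero_of_finite (by simp)
  | succ k ih =>
    refine hasDensity_zero_of_upperDensity_le
      (ge_of_tendsto' tendsto_prod_primes_one_sub_one_div_atTop_zero fun T ↦ ?_)
    have hnull : HasDensity (⋃ p ∈ T, ((p : ℕ) * ·) '' {m : ℕ | m.divisors.card ≤ k}) 0 :=
      hasDensity_biUnion_zero T fun p _ ↦ by simpa using ih.image_mul_left p.2.ne_zero
    exact upperDensity_le_prod_of_subset_siftedSet_union (fun p _ ↦ p.2.ne_zero)
      (pairwise_coprime_primes _) hnull (card_divisors_le_succ_subset k T)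

end FewDivisors

section Matchable

theorem card_divisors_eq_mul_card_filter_not_dvd {p : ℕ} (hp : p.Prime) (n : ℕ) :
    n.divisors.card =
      (n.factorization p + 1) * (n.divisors.filter fun d ↦ ¬ p ∣ d).card := by
  obtain rfl | hn := eq_or_ne n 0
  · simp
  have hcop : p.Coprime (ordCompl[p] n) := Nat.coprime_ordCompl hp hn
  have hfilter : n.divisors.filter (fun d ↦ ¬ p ∣ d) = (ordCompl[p] n).divisors := by
    ext d
    simp only [Finset.mem_filter, Nat.mem_divisors]
    constructor
    · rintro ⟨⟨hdn, -⟩, hpd⟩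
      exact ⟨Nat.dvd_ordCompl_of_dvd_not_dvd hdn hpd, (Nat.ordCompl_pos p hn).ne'⟩
    · rintro ⟨hd, -⟩
      exact ⟨⟨hd.trans (Nat.ordCompl_dvd n p), hn⟩,
        fun hpd ↦ Nat.not_dvd_ordCompl hp hn (hpd.trans hd)⟩
  conv_lhs => rw [← Nat.ordProj_mul_ordCompl_eq_self n p]
  rw [(hcop.pow_left _).card_divisors_mul, hfilter, Nat.divisors_prime_pow hp, Finset.card_map,
    Finset.card_range]

theorem Matchable.card_divisors_div_le {n p : ℕ} (h : Matchable n) (hp : p ≠ 1) :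
    n.divisors.card / p ≤ (n.divisors.filter fun d ↦ ¬ p ∣ d).card := by
  obtain ⟨ψ, hψ, hcop⟩ := h
  have hsub : (Finset.Ioc 0 n.divisors.card).filter (p ∣ ·) ⊆
      (n.divisors.filter fun d ↦ ¬ p ∣ d).image ψ := by
    intro k hk
    obtain ⟨hk, hpk⟩ := Finset.mem_filter.1 hk
    obtain ⟨d, hd, rfl⟩ := hψ.surjOn hk
    refine Finset.mem_image_of_mem ψ (Finset.mem_filter.2 ⟨hd, fun hpd ↦ hp ?_⟩)
    exact Nat.eq_one_of_dvd_coprimes (hcop d hd) hpd hpk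
  rw [← Nat.Ioc_filter_dvd_card_eq_div]
  exact (Finset.card_le_card hsub).trans Finset.card_image_le

theorem Matchable.card_divisors_lt_sq {n p : ℕ} (h : Matchable n) (hp : p.Prime)
    (hpn : p ^ p ∣ n) : n.divisors.card < p ^ 2 := by
  obtain rfl | hn := eq_or_ne n 0
  · simpa using pow_pos hp.pos 2
  set t := n.divisors.card
  have hle : (p + 1) * (t / p) ≤ t :=
    calc (p + 1) * (t / p)
        ≤ (n.factorization p + 1) * (n.divisors.filter fun d ↦ ¬ p ∣ d).card := by
          gcongr
          · exact (hp.pow_dvd_iff_le_factorization hn).1 hpn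
          · exact h.card_divisors_div_le hp.ne_one
      _ = t := (card_divisors_eq_mul_card_filter_not_dvd hp n).symm
  by_contra! hlt
  have hquot : p ≤ t / p := (Nat.le_div_iff_mul_le hp.pos).2 (by rwa [← sq])
  refine lt_irrefl t ?_
  calc t < p * (t / p + 1) := Nat.lt_mul_div_succ t hp.pos
    _ ≤ (p + 1) * (t / p) := by linarith
    _ ≤ t := hle

theorem setOf_matchable_subset (S : Finset Nat.Primes) :
    {n | Matchable n} ⊆ siftedSet (fun p : Nat.Primes ↦ (p : ℕ) ^ (p : ℕ)) S ∪
      {n | n.divisors.card ≤ S.sup fun p ↦ (p : ℕ) ^ 2} := by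
  intro n hn
  refine or_iff_not_imp_left.2 fun hsifted ↦ ?_
  obtain ⟨p, hpS, hpn⟩ := notMem_siftedSet.1 hsifted
  exact (hn.card_divisors_lt_sq p.2 hpn).le.trans
    (Finset.le_sup (f := fun p : Nat.Primes ↦ (p : ℕ) ^ 2) hpS)

theorem upperDensity_matchable_le_prod (S : Finset Nat.Primes) :
    upperDensity {n | Matchable n} ≤ ∏ p ∈ S, (1 - 1 / ((p : ℕ) : ℝ) ^ (p : ℕ)) := by
  have hcop : (S : Set Nat.Primes).Pairwise
      (Function.onFun Nat.Coprime fun p ↦ (p : ℕ) ^ (p : ℕ)) :=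
    (pairwise_coprime_primes _).imp fun p q hpq ↦ Nat.Coprime.pow p q hpq
  simpa using upperDensity_le_prod_of_subset_siftedSet_union (fun p _ ↦ pow_ne_zero _ p.2.ne_zero)
    hcop (hasDensity_card_divisors_le _) (setOf_matchable_subset S)

theorem hasProd_alphaConst :
    HasProd (fun p : Nat.Primes ↦ 1 - 1 / ((p : ℕ) : ℝ) ^ (p : ℕ)) alphaConst := by
  have hgeom : Summable fun p : Nat.Primes ↦ (1 / 2 : ℝ) ^ (p : ℕ) :=
    summable_geometric_two.comp_injective Nat.Primes.coe_nat_injective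
  have hsum : Summable fun p : Nat.Primes ↦ 1 / ((p : ℕ) : ℝ) ^ (p : ℕ) := by
    refine hgeom.of_nonneg_of_le (fun p ↦ by positivity) fun p ↦ ?_
    rw [one_div_pow]
    gcongr
    exact_mod_cast p.2.two_le
  have hmul := Real.multipliable_one_add_of_summable hsum.neg
  simp only [← sub_eq_add_neg] at hmul
  exact hmul.hasProd

end Matchable

open Classical in
theorem stmt_2 :
    Filter.limsup
      (fun x : ℕ => (((Finset.Icc 1 x).filter (fun n => Matchable n)).card : ℝ) / (x : ℝ))
      Filter.atTop ≤ alphaConst := by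
  have hα : upperDensity {n | Matchable n} ≤ alphaConst :=
    ge_of_tendsto' hasProd_alphaConst upperDensity_matchable_le_prod
  simpa only [upperDensity, funext (partialDensity_setOf Matchable)] using hα
end

section
/- For every positive integer n, if 2n is matchable, then n is matchable. -/
/-!
Let `n = p ^ k * m` with `p` a prime not dividing `m`. A coprime matching of `n` can take values
divisible by `p` only at the divisors prime to `p`, which are the divisors of `m`; hence
`⌊(k + 1) τ(m) / p⌋ ≤ τ(m)`. If `p ≤ k + 1` this is an equality, so the matching carries the
divisors of `m` exactly onto the multiples of `p`, and dividing its values by `p` matches `m`.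

For `p = 2` and `2 * n = 2 ^ (a + 1) * m` the inequality reads `a τ(m) ≤ 1`, so `n` is odd, in
which case `n = m`, or `n = 2`.
-/

open Finset

section Divisors

variable {p m : ℕ} (k : ℕ)

lemma card_divisors_prime_pow_mul (hp : p.Prime) (hpm : ¬p ∣ m) :
    #(p ^ k * m).divisors = (k + 1) * #m.divisors := by
  have hcop : (p ^ k).Coprime m := ((hp.coprime_iff_not_dvd).2 hpm).pow_left k
  rw [hcop.card_divisors_mul, Nat.divisors_prime_pow hp, card_map, card_range]

lemma filter_not_dvd_divisors_prime_pow_mul (hp : p.Prime) (hpm : ¬p ∣ m) :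
    {d ∈ (p ^ k * m).divisors | ¬p ∣ d} = m.divisors := by
  have hm : m ≠ 0 := by rintro rfl; exact hpm (dvd_zero p)
  ext d
  simp only [mem_filter, Nat.mem_divisors]
  constructor
  · rintro ⟨⟨hd, -⟩, hpd⟩
    have hcop : d.Coprime (p ^ k) := ((hp.coprime_iff_not_dvd).2 hpd).symm.pow_right k
    exact ⟨hcop.dvd_of_dvd_mul_left hd, hm⟩
  · rintro ⟨hd, -⟩
    exact ⟨⟨hd.mul_left _, mul_ne_zero (pow_ne_zero k hp.ne_zero) hm⟩, fun h ↦ hpm (h.trans hd)⟩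

end Divisors

lemma filter_dvd_subset_image_filter_not_dvd {S T : Finset ℕ} {ψ : ℕ → ℕ} {p : ℕ}
    (hψ : Set.SurjOn ψ S T) (hcop : ∀ d ∈ S, d.Coprime (ψ d)) (hp : p ≠ 1) :
    {i ∈ T | p ∣ i} ⊆ {d ∈ S | ¬p ∣ d}.image ψ := by
  intro i hi
  obtain ⟨hiT, hpi⟩ := mem_filter.1 hi
  obtain ⟨d, hd, rfl⟩ := hψ hiT
  have hpd : ¬p ∣ d := fun hpd ↦ hp (Nat.eq_one_of_dvd_coprimes (hcop d hd) hpd hpi)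
  exact mem_image_of_mem ψ (mem_filter.2 ⟨hd, hpd⟩)

lemma card_filter_dvd_Icc_one (N p : ℕ) : #{i ∈ Icc 1 N | p ∣ i} = N / p :=
  Nat.Ioc_filter_dvd_card_eq_div N p

lemma bijOn_div_filter_dvd_Icc_one (N : ℕ) {p : ℕ} (hp : 0 < p) :
    Set.BijOn (· / p) ↑({i ∈ Icc 1 N | p ∣ i}) ↑(Icc 1 (N / p)) := by
  refine Set.InvOn.bijOn (f' := (p * ·)) ⟨?_, ?_⟩ ?_ ?_
  · intro i hi
    exact Nat.mul_div_cancel' (mem_filter.1 hi).2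
  · intro j _
    exact Nat.mul_div_cancel_left j hp
  · intro i hi
    obtain ⟨hiN, hpi⟩ := mem_filter.1 hi
    obtain ⟨hi_pos, hi_le⟩ := mem_Icc.1 hiN
    exact mem_Icc.2 ⟨Nat.div_pos (Nat.le_of_dvd hi_pos hpi) hp, Nat.div_le_div_right hi_le⟩
  · intro j hj
    obtain ⟨hj_pos, hj_le⟩ := mem_Icc.1 hj
    have hjN : p * j ≤ N := (Nat.mul_le_mul_left p hj_le).trans (Nat.mul_div_le N p)
    exact mem_filter.2 ⟨mem_Icc.2 ⟨Nat.mul_pos hp hj_pos, hjN⟩, dvd_mul_right p j⟩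

namespace Matchable

lemma card_divisors_div_le_s3 {n p : ℕ} (h : Matchable n) (hp : p ≠ 1) :
    #n.divisors / p ≤ #{d ∈ n.divisors | ¬p ∣ d} := by
  obtain ⟨ψ, hψ, hcop⟩ := h
  calc #n.divisors / p = #{i ∈ Icc 1 #n.divisors | p ∣ i} := (card_filter_dvd_Icc_one _ p).symm
    _ ≤ #({d ∈ n.divisors | ¬p ∣ d}.image ψ) :=
      card_le_card (filter_dvd_subset_image_filter_not_dvd hψ.surjOn hcop hp)
    _ ≤ #{d ∈ n.divisors | ¬p ∣ d} := card_image_le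

variable {p k m : ℕ}

lemma succ_mul_card_divisors_div_le (h : Matchable (p ^ k * m)) (hp : p.Prime) (hpm : ¬p ∣ m) :
    (k + 1) * #m.divisors / p ≤ #m.divisors := by
  simpa only [card_divisors_prime_pow_mul k hp hpm, filter_not_dvd_divisors_prime_pow_mul k hp hpm]
    using h.card_divisors_div_le_s3 hp.ne_one

theorem of_prime_pow_mul (h : Matchable (p ^ k * m)) (hp : p.Prime) (hpm : ¬p ∣ m)
    (hk : p ≤ k + 1) : Matchable m := by
  have hcard : #(p ^ k * m).divisors / p = #m.divisors := by
    rw [card_divisors_prime_pow_mul k hp hpm]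
    refine (h.succ_mul_card_divisors_div_le hp hpm).antisymm ?_
    rw [Nat.le_div_iff_mul_le hp.pos, mul_comm]
    exact Nat.mul_le_mul_right _ hk
  obtain ⟨ψ, hψ, hcop⟩ := h
  have hsub : m.divisors ⊆ (p ^ k * m).divisors :=
    filter_not_dvd_divisors_prime_pow_mul k hp hpm ▸ filter_subset _ _
  have himage : {i ∈ Icc 1 #(p ^ k * m).divisors | p ∣ i} = m.divisors.image ψ := by
    refine eq_of_subset_of_card_le ?_ ?_
    · simpa only [filter_not_dvd_divisors_prime_pow_mul k hp hpm] using
        filter_dvd_subset_image_filter_not_dvd hψ.surjOn hcop hp.ne_one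
    · rw [card_filter_dvd_Icc_one, hcard]
      exact card_image_le
  have hbij : Set.BijOn ψ m.divisors ↑({i ∈ Icc 1 #(p ^ k * m).divisors | p ∣ i}) := by
    rw [himage, coe_image]
    exact (hψ.injOn.mono (coe_subset.2 hsub)).bijOn_image
  refine ⟨fun d ↦ ψ d / p, ?_, fun d hd ↦ ?_⟩
  · rw [← hcard]
    exact (bijOn_div_filter_dvd_Icc_one _ hp.pos).comp hbij
  · have hpψ : p ∣ ψ d := (mem_filter.1 (hbij.mapsTo hd)).2
    exact Nat.Coprime.coprime_dvd_right (Nat.div_dvd_of_dvd hpψ) (hcop d (hsub hd))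

lemma odd_or_eq_two {n : ℕ} (h : Matchable (2 * n)) (hn : n ≠ 0) : Odd n ∨ n = 2 := by
  obtain ⟨a, m, hm, rfl⟩ := Nat.exists_eq_two_pow_mul_odd hn
  have hcount : a * #m.divisors ≤ 1 := by
    rw [← mul_assoc, ← pow_succ'] at h
    have hle := h.succ_mul_card_divisors_div_le Nat.prime_two hm.not_two_dvd_nat
    rw [add_assoc, add_mul] at hle
    omega
  rcases Nat.eq_zero_or_pos a with rfl | ha
  · exact .inl (by simpa only [pow_zero, one_mul] using hm)
  · have hcard_pos : 0 < #m.divisors := card_pos.2 (Nat.nonempty_divisors.2 hm.pos.ne')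
    obtain ⟨rfl, hcard⟩ : a = 1 ∧ #m.divisors = 1 :=
      mul_eq_one.1 (hcount.antisymm (Nat.mul_pos ha hcard_pos))
    exact .inr (by rw [(Nat.divisors_card_eq_one_iff m).1 hcard, pow_one, mul_one])

end Matchable

lemma matchable_of_prime {p : ℕ} (hp : p.Prime) : Matchable p := by
  have hcard : #p.divisors = 2 := by rw [hp.divisors, card_pair hp.ne_one.symm]
  refine ⟨fun d ↦ if d = 1 then 2 else 1, ?_, ?_⟩
  · have himage : p.divisors.image (fun d ↦ if d = 1 then 2 else 1) = Icc 1 2 := by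
      rw [hp.divisors, image_insert, image_singleton, if_pos rfl, if_neg hp.ne_one]
      decide
    rw [hcard, ← himage, coe_image]
    refine (card_image_iff.1 ?_).bijOn_image
    rw [himage, hcard, Nat.card_Icc]
  · intro d _
    dsimp only
    split_ifs with hd
    · rw [hd, Nat.gcd_one_left]
    · exact Nat.gcd_one_right d

theorem stmt_3 (n : ℕ) (hn : 0 < n) (h : Matchable (2 * n)) : Matchable n := by
  rcases h.odd_or_eq_two hn.ne' with hodd | rfl
  · rw [← pow_one 2] at h
    exact h.of_prime_pow_mul Nat.prime_two hodd.not_two_dvd_nat le_rfl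
  · exact matchable_of_prime Nat.prime_two
end

section
/- Every squarefree positive integer having at least 45 distinct prime factors is matchable. -/
section

open Finset
open scoped Nat

/-! ### Stochastic domination -/

section Domination

variable {ι α β : Type*} {r : ι → α → Prop} [∀ i m, Decidable (r i m)]

/-- For a uniformly random `m ∈ M`, the random set `{i ∈ G | r i m}` is stochastically dominated by
a uniformly random subset of `G`: each up-closed family `U` of sets is at most as probable for the
former as for the latter. The denominators `#M` and `2 ^ #G` are cleared. -/
def Dominated (r : ι → α → Prop) [∀ i m, Decidable (r i m)] (M : Finset α) (G : Finset ι) : Prop :=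
  ∀ (U : Finset ι → Prop) [DecidablePred U], Monotone U →
    #{m ∈ M | U {i ∈ G | r i m}} * 2 ^ #G ≤ #M * #{T ∈ G.powerset | U T}

/-- The elements of `M` related to everything in `A` and to nothing in `B`. -/
def cell (r : ι → α → Prop) [∀ i m, Decidable (r i m)] (M : Finset α) (A B : Finset ι) :
    Finset α :=
  {m ∈ M | (∀ i ∈ A, r i m) ∧ ∀ i ∈ B, ¬ r i m}

/-- The elements of `M` related to at least `j` members of `L`. -/
def level (r : ι → α → Prop) [∀ i m, Decidable (r i m)] (M : Finset α) (L : Finset ι) (j : ℕ) :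
    Finset α :=
  {m ∈ M | j ≤ #{i ∈ L | r i m}}

theorem Dominated.of_image [DecidableEq β] {r' : ι → β → Prop} [∀ i m, Decidable (r' i m)]
    {M : Finset α} {G : Finset ι} {g : α → β} (hg : Set.InjOn g M)
    (hr : ∀ m ∈ M, ∀ i ∈ G, r' i (g m) ↔ r i m) (h : Dominated r' (M.image g) G) :
    Dominated r M G := by
  intro U _ hU
  have hpattern : {m ∈ M | U {i ∈ G | r' i (g m)}} = {m ∈ M | U {i ∈ G | r i m}} :=
    filter_congr fun m hm => by rw [filter_congr (hr m hm)]
  have hdom := h U hU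
  rwa [filter_image, card_image_of_injOn (hg.mono (filter_subset _ _)), card_image_of_injOn hg,
    hpattern] at hdom

/-- The remaining `m` have patterns in the up-closed family of sets meeting every `S ∈ 𝒜`, and the
complements `G \ S` with `S ∈ 𝒜` lie outside this family. -/
theorem Dominated.card_le_card_filter {M : Finset α} {G : Finset ι} (h : Dominated r M G)
    (hcard : #M = 2 ^ #G) {𝒜 : Finset (Finset ι)} (h𝒜 : ∀ S ∈ 𝒜, S ⊆ G) :
    #𝒜 ≤ #{m ∈ M | ∃ S ∈ 𝒜, ∀ i ∈ S, ¬ r i m} := by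
  classical
  let U : Finset ι → Prop := fun T => ∀ S ∈ 𝒜, ∃ i ∈ S, i ∈ T
  have hU : Monotone U := fun T T' hTT' hT S hS =>
    let ⟨i, hiS, hiT⟩ := hT S hS
    ⟨i, hiS, hTT' hiT⟩
  have hbad : {m ∈ M | ¬ ∃ S ∈ 𝒜, ∀ i ∈ S, ¬ r i m} = {m ∈ M | U {i ∈ G | r i m}} :=
    filter_congr fun m _ => by grind
  have hcompl : #𝒜 ≤ #{T ∈ G.powerset | ¬ U T} := by
    refine card_le_card_of_injOn (G \ ·) (fun S hS => ?_) fun S hS S' hS' heq => ?_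
    · simp only [coe_filter, mem_powerset, Set.mem_ofPred_eq]
      exact ⟨sdiff_subset, fun hUS => by grind⟩
    · rw [← Finset.sdiff_sdiff_eq_self (h𝒜 S hS), ← Finset.sdiff_sdiff_eq_self (h𝒜 S' hS')]
      exact congrArg (G \ ·) heq
  have hdom : #{m ∈ M | U {i ∈ G | r i m}} ≤ #{T ∈ G.powerset | U T} := by
    have := h U hU
    rw [hcard, mul_comm] at this
    exact Nat.le_of_mul_le_mul_left this (by positivity)
  have hM := card_filter_add_card_filter_not (s := M) fun m => ∃ S ∈ 𝒜, ∀ i ∈ S, ¬ r i m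
  have hG : #{T ∈ G.powerset | U T} + #{T ∈ G.powerset | ¬ U T} = #G.powerset :=
    card_filter_add_card_filter_not U
  rw [hbad, hcard] at hM
  rw [card_powerset] at hG
  omega

theorem Dominated.exists_bijOn {M : Finset α} {G : Finset ι} (h : Dominated r M G)
    (hcard : #M = 2 ^ #G) :
    ∃ f : Finset ι → α, Set.BijOn f G.powerset M ∧ ∀ T ⊆ G, ∀ i ∈ T, ¬ r i (f T) := by
  classical
  obtain ⟨f, hf, hfM⟩ := (all_card_le_biUnion_card_iff_exists_injective
    fun S : G.powerset => {m ∈ M | ∀ i ∈ (S : Finset ι), ¬ r i m}).1 fun 𝒜 => by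
      rw [← card_image_of_injective 𝒜 Subtype.val_injective]
      refine (h.card_le_card_filter hcard fun S hS => ?_).trans (card_le_card fun m hm => ?_)
      · grind
      · simp only [mem_filter, mem_image, mem_biUnion] at hm ⊢
        grind
  have : Nonempty α := ⟨f ⟨∅, empty_mem_powerset G⟩⟩
  let g := Function.extend Subtype.val f fun _ => Classical.arbitrary α
  have hg : ∀ S : G.powerset, g S = f S := Subtype.val_injective.extend_apply f _
  have hmaps : Set.MapsTo g G.powerset M := fun S hS =>
    hg ⟨S, hS⟩ ▸ (mem_filter.1 (hfM ⟨S, hS⟩)).1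
  have hinj : Set.InjOn g G.powerset := fun S hS S' hS' heq =>
    congrArg Subtype.val (hf (by rwa [← hg, ← hg]) : (⟨S, hS⟩ : G.powerset) = ⟨S', hS'⟩)
  refine ⟨g, ⟨hmaps, hinj, surjOn_of_injOn_of_card_le g hmaps hinj ?_⟩, fun S hS => ?_⟩
  · rw [hcard, card_powerset]
  · exact hg ⟨S, mem_powerset.2 hS⟩ ▸ (mem_filter.1 (hfM ⟨S, mem_powerset.2 hS⟩)).2

section UpClosed

variable {U : Finset ι → Prop} [DecidablePred U] {M : Finset α} {L : Finset ι}

theorem two_pow_le_card_filter_powerset (hU : Monotone U) {T : Finset ι} (hTL : T ⊆ L)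
    (hT : U T) : 2 ^ (#L - #T) ≤ #{S ∈ L.powerset | U S} := by
  classical
  rw [← card_Icc_finset hTL]
  refine card_le_card fun S hS => ?_
  rw [mem_Icc] at hS
  exact mem_filter.2 ⟨mem_powerset.2 hS.2, hU hS.1 hT⟩

/-- Sets outside `U` avoid `A`. -/
theorem two_pow_le_card_filter_powerset_add (hU : Monotone U) {A : Finset ι} (hAL : A ⊆ L)
    (hA : ∀ i ∈ A, U {i}) : 2 ^ #L ≤ #{S ∈ L.powerset | U S} + 2 ^ (#L - #A) := by
  classical
  rw [← card_sdiff_of_subset hAL, ← card_powerset, ← card_powerset,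
    ← card_filter_add_card_filter_not (s := L.powerset) U]
  gcongr
  intro S hS
  rw [mem_filter, mem_powerset] at hS
  rw [mem_powerset, subset_sdiff, disjoint_right]
  exact ⟨hS.1, fun i hi hiS => hS.2 (hU (singleton_subset_iff.2 hiS) (hA i hi))⟩

theorem card_filter_pattern_mul_le_of_level (hU : Monotone U) (hempty : ¬ U ∅)
    (hsingleton : ∀ i ∈ L, ¬ U {i})
    (hlevel : ∀ j, 2 ≤ j → (#(level r M L j) : ℝ) ≤ #M / 2 ^ j) :
    #{m ∈ M | U {i ∈ L | r i m}} * 2 ^ #L ≤ #M * #{T ∈ L.powerset | U T} := by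
  rcases ({T ∈ L.powerset | U T}).eq_empty_or_nonempty with hnone | hsome
  · have hpattern : {m ∈ M | U {i ∈ L | r i m}} = ∅ := filter_eq_empty_iff.2 fun m _ =>
      filter_eq_empty_iff.1 hnone (mem_powerset.2 (filter_subset _ _))
    simp [hpattern]
  obtain ⟨T, hT, hmin⟩ := exists_min_image _ card hsome
  rw [mem_filter, mem_powerset] at hT
  have hcard : 2 ≤ #T := by
    by_contra! hlt
    obtain rfl | ⟨i, rfl⟩ : T = ∅ ∨ ∃ i, T = {i} := by
      rw [← card_eq_zero, ← card_eq_one]; omega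
    · exact hempty hT.2
    · exact hsingleton i (hT.1 (mem_singleton_self i)) hT.2
  have hpattern : #{m ∈ M | U {i ∈ L | r i m}} ≤ #(level r M L #T) :=
    card_le_card (monotone_filter_right _ fun m _ hm =>
      hmin _ (mem_filter.2 ⟨mem_powerset.2 (filter_subset _ _), hm⟩))
  have hlevelT : #(level r M L #T) * 2 ^ #T ≤ #M := by
    exact_mod_cast (le_div_iff₀ (by positivity)).1 (hlevel _ hcard)
  calc #{m ∈ M | U {i ∈ L | r i m}} * 2 ^ #L
      ≤ #(level r M L #T) * 2 ^ #L := by gcongr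
    _ = #(level r M L #T) * 2 ^ #T * 2 ^ (#L - #T) := by
        rw [mul_assoc, ← pow_add, Nat.add_sub_cancel' (card_le_card hT.1)]
    _ ≤ #M * #{T ∈ L.powerset | U T} := by
        gcongr
        exact two_pow_le_card_filter_powerset hU hT.1 hT.2

theorem card_filter_pattern_le (hempty : ¬ U ∅) :
    #{m ∈ M | U {i ∈ L | r i m}} ≤ #(level r M {i ∈ L | U {i}} 1) + #(level r M L 2) := by
  classical
  refine (card_le_card fun m hm => ?_).trans (card_union_le _ _)
  rw [mem_filter] at hm
  rw [mem_union, or_iff_not_imp_right]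
  intro htwo
  obtain hnone | ⟨i, hi⟩ : {i ∈ L | r i m} = ∅ ∨ ∃ i, {i ∈ L | r i m} = {i} := by
    rw [← card_eq_zero, ← card_eq_one]
    simp only [level, mem_filter, hm.1, true_and] at htwo
    omega
  · exact absurd (hnone ▸ hm.2) hempty
  · have hiL := mem_filter.1 (hi ▸ mem_singleton_self i)
    exact mem_filter.2 ⟨hm.1, card_pos.2
      ⟨i, mem_filter.2 ⟨mem_filter.2 ⟨hiL.1, hi ▸ hm.2⟩, hiL.2⟩⟩⟩

theorem card_filter_pattern_mul_le_of_singleton (hU : Monotone U) (hempty : ¬ U ∅)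
    (hsingle : (#(level r M {i ∈ L | U {i}} 1) + #(level r M L 2) : ℝ) ≤
      (1 - (1 / 2) ^ #{i ∈ L | U {i}}) * #M) :
    #{m ∈ M | U {i ∈ L | r i m}} * 2 ^ #L ≤ #M * #{T ∈ L.powerset | U T} := by
  have hpattern : (#{m ∈ M | U {i ∈ L | r i m}} : ℝ) ≤
      (1 - (1 / 2) ^ #{i ∈ L | U {i}}) * #M :=
    le_trans (mod_cast card_filter_pattern_le hempty) hsingle
  have hAL : {i ∈ L | U {i}} ⊆ L := filter_subset _ _
  have hfamily : (2 : ℝ) ^ #L - 2 ^ (#L - #{i ∈ L | U {i}}) ≤ #{T ∈ L.powerset | U T} := by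
    rw [sub_le_iff_le_add]
    exact_mod_cast two_pow_le_card_filter_powerset_add hU hAL fun i hi => (mem_filter.1 hi).2
  rify
  calc (#{m ∈ M | U {i ∈ L | r i m}} : ℝ) * 2 ^ #L
      ≤ (1 - (1 / 2) ^ #{i ∈ L | U {i}}) * #M * 2 ^ #L := by gcongr
    _ = #M * (2 ^ #L - 2 ^ (#L - #{i ∈ L | U {i}})) := by
        rw [pow_sub₀ _ two_ne_zero (card_le_card hAL), one_div, inv_pow]
        ring
    _ ≤ #M * #{T ∈ L.powerset | U T} := by gcongr

end UpClosed

/-- If `U` contains the singletons of exactly `A ≠ ∅`, then the sets outside `U` are subsets of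
`L \ A`, and `hsingle` applies. If `U` contains no singleton and `j ≥ 2` is the least size of a
member, then `U` has at least `2 ^ (#L - j)` members, and `hlevel` applies. -/
theorem dominated_of_level {M : Finset α} {L : Finset ι}
    (hsingle : ∀ A ⊆ L, A.Nonempty →
      (#(level r M A 1) + #(level r M L 2) : ℝ) ≤ (1 - (1 / 2) ^ #A) * #M)
    (hlevel : ∀ j, 2 ≤ j → (#(level r M L j) : ℝ) ≤ #M / 2 ^ j) :
    Dominated r M L := by
  intro U _ hU
  by_cases hempty : U ∅
  · have hall : ∀ T, U T := fun T => hU (empty_subset T) hempty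
    simp [hall]
  rcases ({i ∈ L | U {i}}).eq_empty_or_nonempty with hA | hA
  · exact card_filter_pattern_mul_le_of_level hU hempty (filter_eq_empty_iff.1 hA) hlevel
  · exact card_filter_pattern_mul_le_of_singleton hU hempty (hsingle _ (filter_subset _ _) hA)

variable [DecidableEq ι]

section Cell

variable {M : Finset α} {A B : Finset ι} {i : ι}

theorem filter_cell : {m ∈ cell r M A B | r i m} = cell r M (insert i A) B := by
  grind [cell]

theorem filter_not_cell : {m ∈ cell r M A B | ¬ r i m} = cell r M A (insert i B) := by
  grind [cell]

theorem cell_filter : cell r {m ∈ M | r i m} A B = cell r M (insert i A) B := by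
  grind [cell]

theorem cell_filter_not : cell r {m ∈ M | ¬ r i m} A B = cell r M A (insert i B) := by
  grind [cell]

theorem card_cell_insert_add_card_cell_insert :
    #(cell r M (insert i A) B) + #(cell r M A (insert i B)) = #(cell r M A B) := by
  rw [← filter_cell, ← filter_not_cell, card_filter_add_card_filter_not]

end Cell

/-- The family `U` splits into its sections at sets with and without `i`; the former section is the
larger one, and it carries at most half of the mass. -/
theorem Dominated.insert_of_card_le {M : Finset α} {G : Finset ι} {i : ι} (hi : i ∉ G)
    (hcard : #{m ∈ M | r i m} ≤ #{m ∈ M | ¬ r i m})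
    (hpos : Dominated r {m ∈ M | r i m} G) (hneg : Dominated r {m ∈ M | ¬ r i m} G) :
    Dominated r M (insert i G) := by
  intro U _ hU
  have hUi : Monotone fun T => U (insert i T) := fun S T h => hU (insert_subset_insert i h)
  have hsplit : #{m ∈ M | U {l ∈ insert i G | r l m}} =
      #{m ∈ {m ∈ M | r i m} | U (insert i {l ∈ G | r l m})} +
        #{m ∈ {m ∈ M | ¬ r i m} | U {l ∈ G | r l m}} := by
    rw [← card_filter_add_card_filter_not (fun m => r i m), filter_filter, filter_filter,
      filter_filter, filter_filter]
    congr 2 <;> exact filter_congr fun m _ => by rw [filter_insert]; grind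
  have hpowerset : #{T ∈ (insert i G).powerset | U T} =
      #{T ∈ G.powerset | U T} + #{T ∈ G.powerset | U (insert i T)} := by
    simp only [card_filter, sum_powerset_insert hi]
  have hsection : #{T ∈ G.powerset | U T} ≤ #{T ∈ G.powerset | U (insert i T)} :=
    card_le_card (monotone_filter_right _ fun T _ hT => hU (subset_insert i T) hT)
  have hM := card_filter_add_card_filter_not (s := M) (fun m => r i m)
  have hdom_pos := hpos _ hUi
  have hdom_neg := hneg U hU
  rw [hsplit, hpowerset, card_insert_of_notMem hi, ← hM, pow_succ]
  zify at *
  nlinarith [mul_nonneg (sub_nonneg.2 hcard) (sub_nonneg.2 hsection)]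

theorem dominated_union_of_cell {M : Finset α} {S L : Finset ι} (hSL : Disjoint S L)
    (hbranch : ∀ i ∈ S, ∀ A ⊆ S.erase i, ∀ B ⊆ S.erase i, Disjoint A B →
      #(cell r M (insert i A) B) ≤ #(cell r M A (insert i B)))
    (hcell : ∀ A ⊆ S, Dominated r (cell r M A (S \ A)) L) :
    Dominated r M (S ∪ L) := by
  induction S using Finset.induction_on generalizing M with
  | empty => simpa [cell] using hcell ∅
  | insert i S hi ih =>
    rw [disjoint_insert_left] at hSL
    rw [insert_union]
    refine Dominated.insert_of_card_le (by grind) ?_ (ih hSL.2 ?_ ?_) (ih hSL.2 ?_ ?_)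
    · simpa [cell] using hbranch i (mem_insert_self i S) ∅ (by simp) ∅ (by simp) (by simp)
    · intro l hl A hA B hB hAB
      rw [cell_filter, cell_filter, insert_comm]
      exact hbranch l (by grind) _ (by grind) _ (by grind) (by grind)
    · intro A hA
      rw [cell_filter, show S \ A = insert i S \ insert i A by grind]
      exact hcell _ (insert_subset_insert i hA)
    · intro l hl A hA B hB hAB
      rw [cell_filter_not, cell_filter_not, insert_comm]
      exact hbranch l (by grind) _ (by grind) _ (by grind) (by grind)
    · intro A hA
      rw [cell_filter_not, show insert i (S \ A) = insert i S \ A by grind]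
      exact hcell A (hA.trans (subset_insert i S))

end Domination

/-! ### Level counts -/

theorem esymm_mul_factorial_le_sum_pow {s : Multiset ℝ} (hs : ∀ x ∈ s, 0 ≤ x) (j : ℕ) :
    s.esymm j * j ! ≤ s.sum ^ j := by
  induction s using Multiset.induction_on generalizing j with
  | empty => cases j <;> simp [Multiset.esymm, Multiset.powersetCard_zero_right]
  | cons a s ih =>
    cases j with
    | zero => simp [Multiset.esymm]
    | succ j =>
      have ha := hs a (Multiset.mem_cons_self a s)
      have hs' := fun x hx => hs x (Multiset.mem_cons_of_mem hx)
      have hesymm : (a ::ₘ s).esymm (j + 1) = s.esymm (j + 1) + a * s.esymm j := by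
        simp only [Multiset.esymm, Multiset.powersetCard_cons, Multiset.map_add, Multiset.map_map,
          Multiset.sum_add, Function.comp_def, Multiset.prod_cons, Multiset.sum_map_mul_left]
      calc (a ::ₘ s).esymm (j + 1) * (j + 1)!
          = s.esymm (j + 1) * (j + 1)! + (j + 1) * a * (s.esymm j * j !) := by
            rw [hesymm, Nat.factorial_succ]; push_cast; ring
        _ ≤ s.sum ^ (j + 1) + (j + 1) * a * s.sum ^ j := by
            gcongr
            · exact ih hs' (j + 1)
            · exact ih hs' j
        _ ≤ (s.sum + a) ^ (j + 1) := by
            have hsum := Multiset.sum_nonneg hs'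
            have := pow_add_mul_le_add_pow hsum (by positivity : 0 ≤ 2 * s.sum + a) (j + 1)
            rw [Nat.add_sub_cancel] at this
            push_cast at this
            linarith
        _ = (a ::ₘ s).sum ^ (j + 1) := by rw [Multiset.sum_cons, add_comm]

theorem sum_powersetCard_prod_le {ι : Type*} {L : Finset ι} {w : ι → ℝ}
    (hw : ∀ i ∈ L, 0 ≤ w i) (j : ℕ) :
    ∑ T ∈ L.powersetCard j, ∏ i ∈ T, w i ≤ (∑ i ∈ L, w i) ^ j / j ! := by
  rw [le_div_iff₀ (by positivity), ← esymm_map_val]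
  exact esymm_mul_factorial_le_sum_pow (by simpa using hw) j

section Level

variable {ι α : Type*} {r : ι → α → Prop} [∀ i m, Decidable (r i m)] [DecidableEq ι]
  {M : Finset α} {A B L : Finset ι} {j : ℕ}

theorem card_level_cell_le_sum :
    #(level r (cell r M A B) L j) ≤ ∑ T ∈ L.powersetCard j, #(cell r M (A ∪ T) B) := by
  classical
  refine (card_le_card fun m hm => ?_).trans card_biUnion_le
  rw [level, mem_filter] at hm
  obtain ⟨T, hT, hTcard⟩ := exists_subset_card_eq hm.2
  rw [mem_biUnion]
  refine ⟨T, mem_powersetCard.2 ⟨hT.trans (filter_subset _ _), hTcard⟩, ?_⟩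
  grind [cell]

theorem card_level_cell_le {w : ι → ℝ} {a b : ℝ} (hw : ∀ i ∈ L, 0 ≤ w i) (ha : 0 ≤ a)
    (hcell : ∀ T ⊆ L, (#(cell r M (A ∪ T) B) : ℝ) ≤ a * ∏ i ∈ T, w i + b) :
    (#(level r (cell r M A B) L j) : ℝ) ≤
      a * ((∑ i ∈ L, w i) ^ j / j !) + (#L).choose j * b := by
  calc (#(level r (cell r M A B) L j) : ℝ)
      ≤ ∑ T ∈ L.powersetCard j, (#(cell r M (A ∪ T) B) : ℝ) := mod_cast card_level_cell_le_sum
    _ ≤ ∑ T ∈ L.powersetCard j, (a * ∏ i ∈ T, w i + b) :=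
        sum_le_sum fun T hT => hcell T (mem_powersetCard.1 hT).1
    _ = a * (∑ T ∈ L.powersetCard j, ∏ i ∈ T, w i) + (#L).choose j * b := by
        rw [sum_add_distrib, ← mul_sum, sum_const, card_powersetCard, nsmul_eq_mul]
    _ ≤ a * ((∑ i ∈ L, w i) ^ j / j !) + (#L).choose j * b := by
        gcongr
        exact sum_powersetCard_prod_le hw j

end Level

/-! ### Counting in intervals -/

section Interval

variable {A B : Finset ℕ}

theorem card_filter_Ico_dvd (k q : ℕ) {d : ℕ} (hd : 0 < d) :
    #{x ∈ Ico k (k + d * q) | d ∣ x} = q := by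
  have hperiodic : Function.Periodic (d ∣ ·) (d * q) := fun x =>
    propext (Nat.dvd_add_left (dvd_mul_right d q))
  rw [Nat.filter_Ico_card_eq_of_periodic _ _ _ hperiodic]
  simpa [Nat.modEq_zero_iff_dvd, hd] using Nat.count_modEq_card (d * q) hd 0

theorem cell_dvd_empty (M : Finset ℕ) (hA : ∀ p ∈ A, p.Prime) :
    cell (· ∣ ·) M A ∅ = {m ∈ M | ∏ p ∈ A, p ∣ m} := by
  simp only [cell, notMem_empty, IsEmpty.forall_iff, implies_true, and_true]
  exact filter_congr fun m _ => ⟨fun h => prod_primes_dvd m (fun p hp => (hA p hp).prime) h,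
    fun h p hp => (dvd_prod_of_mem _ hp).trans h⟩

theorem card_cell_Ico_mul (k q : ℕ) (hA : ∀ p ∈ A, p.Prime) (hB : ∀ p ∈ B, p.Prime)
    (hAB : Disjoint A B) :
    #(cell (· ∣ ·) (Ico k (k + (∏ p ∈ A, p) * (∏ p ∈ B, p) * q)) A B) =
      q * ∏ p ∈ B, (p - 1) := by
  induction B using Finset.induction_on generalizing A q with
  | empty =>
    rw [cell_dvd_empty _ hA, prod_empty, prod_empty, mul_one, mul_one,
      card_filter_Ico_dvd _ _ (prod_pos fun p hp => (hA p hp).pos)]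
  | insert p B hp ih =>
    rw [disjoint_insert_right] at hAB
    rw [forall_mem_insert] at hB
    have hall := ih (p * q) hA hB.2 hAB.2
    have hmultiples := ih q (A := insert p A) (by grind) hB.2 (disjoint_insert_left.2 ⟨hp, hAB.2⟩)
    rw [prod_insert hAB.1] at hmultiples
    rw [prod_insert hp, prod_insert hp]
    set D := (∏ p ∈ A, p) * (p * ∏ p ∈ B, p) * q
    rw [show (∏ p ∈ A, p) * (∏ p ∈ B, p) * (p * q) = D by ring] at hall
    rw [show p * (∏ p ∈ A, p) * (∏ p ∈ B, p) * q = D by ring] at hmultiples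
    have hsplit := card_cell_insert_add_card_cell_insert
      (r := (· ∣ ·)) (M := Ico k (k + D)) (A := A) (B := B) (i := p)
    rw [hmultiples, hall] at hsplit
    obtain ⟨s, rfl⟩ := Nat.exists_eq_succ_of_ne_zero hB.1.ne_zero
    rw [Nat.succ_eq_add_one, Nat.add_sub_cancel] at *
    linarith

theorem card_cell_Ico_le (k N : ℕ) (hA : ∀ p ∈ A, p.Prime) (hB : ∀ p ∈ B, p.Prime)
    (hAB : Disjoint A B) :
    (#(cell (· ∣ ·) (Ico k (k + N)) A B) : ℝ) ≤
      (∏ p ∈ B, (p - 1) : ℕ) * (N / ((∏ p ∈ A, p) * (∏ p ∈ B, p) : ℕ) + 1) := by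
  set D := (∏ p ∈ A, p) * ∏ p ∈ B, p
  have hD : 0 < D := Nat.mul_pos (prod_pos fun p hp => (hA p hp).pos)
    (prod_pos fun p hp => (hB p hp).pos)
  have hN : N ≤ D * (N / D + 1) := (Nat.lt_mul_div_succ N hD).le
  have hcard : #(cell (· ∣ ·) (Ico k (k + N)) A B) ≤ (N / D + 1) * ∏ p ∈ B, (p - 1) := by
    rw [← card_cell_Ico_mul k _ hA hB hAB]
    exact card_le_card (filter_subset_filter _ (Ico_subset_Ico_right (by gcongr)))
  calc (#(cell (· ∣ ·) (Ico k (k + N)) A B) : ℝ)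
      ≤ ((N / D : ℕ) + 1) * (∏ p ∈ B, (p - 1) : ℕ) := mod_cast hcard
    _ ≤ (N / D + 1) * (∏ p ∈ B, (p - 1) : ℕ) := by gcongr; exact Nat.cast_div_le
    _ = _ := mul_comm _ _

theorem le_card_cell_Ico (k N : ℕ) (hA : ∀ p ∈ A, p.Prime) (hB : ∀ p ∈ B, p.Prime)
    (hAB : Disjoint A B) :
    (∏ p ∈ B, (p - 1) : ℕ) * (N / ((∏ p ∈ A, p) * (∏ p ∈ B, p) : ℕ) - 1 : ℝ) ≤
      #(cell (· ∣ ·) (Ico k (k + N)) A B) := by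
  set D := (∏ p ∈ A, p) * ∏ p ∈ B, p
  have hcard : (N / D) * ∏ p ∈ B, (p - 1) ≤ #(cell (· ∣ ·) (Ico k (k + N)) A B) := by
    rw [← card_cell_Ico_mul k _ hA hB hAB]
    refine card_le_card (filter_subset_filter _ (Ico_subset_Ico_right ?_))
    gcongr
    exact Nat.mul_div_le N D
  calc (∏ p ∈ B, (p - 1) : ℕ) * (N / D - 1 : ℝ)
      ≤ (∏ p ∈ B, (p - 1) : ℕ) * (N / D : ℕ) := by
        gcongr
        rw [← Nat.floor_div_eq_div (K := ℝ)]
        exact (Nat.sub_one_lt_floor _).le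
    _ ≤ #(cell (· ∣ ·) (Ico k (k + N)) A B) := by rw [mul_comm]; exact_mod_cast hcard

theorem prod_le_mul_prod_sub_one {y : ℕ} (hy : 1 ≤ y) {B : Finset ℕ} (hB : B ⊆ Icc 2 y) :
    ∏ p ∈ B, p ≤ y * ∏ p ∈ B, (p - 1) := by
  induction y, hy using Nat.le_induction generalizing B with
  | base => simp_all
  | succ y _ ih =>
    have hle : ∏ p ∈ B.erase (y + 1), p ≤ y * ∏ p ∈ B.erase (y + 1), (p - 1) := ih (by grind)
    by_cases hyB : y + 1 ∈ B
    · rw [← mul_prod_erase B _ hyB, ← mul_prod_erase B (· - 1) hyB]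
      exact Nat.mul_le_mul_left _ hle
    · rw [erase_eq_of_notMem hyB] at hle
      exact hle.trans (Nat.mul_le_mul_right _ y.le_succ)

end Interval

theorem card_cell_Ico_insert_le {A B : Finset ℕ} {k N p : ℕ} (hp : p.Prime) (hp_two : p ≠ 2)
    (hA : ∀ q ∈ A, q.Prime) (hB : ∀ q ∈ B, q.Prime) (hAB : Disjoint A B) (hpA : p ∉ A)
    (hpB : p ∉ B) (hN : 3 * (p * ((∏ q ∈ A, q) * ∏ q ∈ B, q)) ≤ N) :
    #(cell (· ∣ ·) (Ico k (k + N)) (insert p A) B) ≤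
      #(cell (· ∣ ·) (Ico k (k + N)) A (insert p B)) := by
  have hp_three : 3 ≤ p := hp.two_le.lt_of_ne' hp_two
  have hD : 0 < p * ((∏ q ∈ A, q) * ∏ q ∈ B, q) := Nat.mul_pos hp.pos
    (Nat.mul_pos (prod_pos fun q hq => (hA q hq).pos) (prod_pos fun q hq => (hB q hq).pos))
  have hupper := card_cell_Ico_le (A := insert p A) (B := B) k N (by grind) hB
    (disjoint_insert_left.2 ⟨hpB, hAB⟩)
  have hlower := le_card_cell_Ico (A := A) (B := insert p B) k N hA (by grind)
    (disjoint_insert_right.2 ⟨hpA, hAB⟩)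
  rw [prod_insert hpA, mul_assoc] at hupper
  rw [prod_insert hpB, prod_insert hpB, mul_left_comm, Nat.cast_mul (p - 1),
    Nat.cast_pred hp.pos] at hlower
  set x : ℝ := N / ((p * ((∏ q ∈ A, q) * ∏ q ∈ B, q) : ℕ) : ℝ) with hx
  set c : ℝ := ((∏ q ∈ B, (q - 1) : ℕ) : ℝ)
  have hx_three : 3 ≤ x := by
    rw [hx, le_div_iff₀ (by exact_mod_cast hD)]
    exact_mod_cast hN
  have hp' : (3 : ℝ) ≤ p := mod_cast hp_three
  have hmain : c * (x + 1) ≤ (p - 1) * c * (x - 1) := by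
    rw [mul_comm ((p : ℝ) - 1), mul_assoc]
    gcongr
    nlinarith
  exact_mod_cast hupper.trans (hmain.trans hlower)

/-! ### Domination from bounds on the levels -/

section LevelBounds

variable {ι α : Type*} {r : ι → α → Prop} [∀ i m, Decidable (r i m)]

/-- For `a ≤ 4` the bound `s ≤ a / 14` is the stronger one, for `a ≥ 5` it is `s ≤ 7 / 10`. -/
theorem add_le_one_sub_half_pow {a : ℕ} {s : ℝ} (ha : 1 ≤ a) (hs : s ≤ 7 / 10)
    (hsa : s ≤ a * (1 / 14)) : s + 246 / 1000 ≤ 999 / 1000 * (1 - (1 / 2) ^ a) := by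
  rcases lt_or_ge a 5 with h | h
  · interval_cases a <;> norm_num at hsa ⊢ <;> linarith
  · have hpow : (1 / 2 : ℝ) ^ a ≤ (1 / 2) ^ 5 :=
      pow_le_pow_of_le_one (by norm_num) (by norm_num) h
    linarith

theorem dominated_of_card_level_le {M : Finset α} {L : Finset ι} {w : ι → ℝ} {c x : ℝ}
    (hc : 0 ≤ c) (hx : 2000 * ((#L : ℝ) ^ 2 + 1) ≤ x) (hcard : c * (x - 1) ≤ #M)
    (hw : ∀ i ∈ L, 0 ≤ w i) (hw_le : ∀ i ∈ L, w i ≤ 1 / 14) (hsum : ∑ i ∈ L, w i ≤ 7 / 10)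
    (hone : ∀ A ⊆ L, (#(level r M A 1) : ℝ) ≤ c * (x * ∑ i ∈ A, w i + #A))
    (htwo : (#(level r M L 2) : ℝ) ≤ c * (x * (49 / 200) + (#L : ℝ) ^ 2 / 2))
    (hlarge : ∀ j, 3 ≤ j → #(level r M L j) * (2 : ℝ) ^ j ≤ c * (99 / 100 * x)) :
    Dominated r M L := by
  have hx0 : 0 ≤ x := le_trans (by positivity) hx
  apply dominated_of_level
  · intro A hA hA_nonempty
    have hA_card : (#A : ℝ) ≤ (#L : ℝ) ^ 2 := mod_cast
      (card_le_card hA).trans (Nat.le_self_pow two_ne_zero _)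
    have hmass : ∑ i ∈ A, w i + 246 / 1000 ≤ 999 / 1000 * (1 - (1 / 2) ^ #A) := by
      refine add_le_one_sub_half_pow hA_nonempty.card_pos ?_ ?_
      · exact (sum_le_sum_of_subset_of_nonneg hA fun i hi _ => hw i hi).trans hsum
      · rw [← nsmul_eq_mul]
        exact sum_le_card_nsmul _ _ _ fun i hi => hw_le i (hA hi)
    have hpow : (1 / 2 : ℝ) ^ #A ≤ 1 := pow_le_one₀ (by norm_num) (by norm_num)
    calc (#(level r M A 1) + #(level r M L 2) : ℝ)
        ≤ c * (x * ∑ i ∈ A, w i + #A) + c * (x * (49 / 200) + (#L : ℝ) ^ 2 / 2) :=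
          add_le_add (hone A hA) htwo
      _ = c * (x * (∑ i ∈ A, w i + 49 / 200) + (#A + (#L : ℝ) ^ 2 / 2)) := by ring
      _ ≤ c * (x * (∑ i ∈ A, w i + 246 / 1000)) := by gcongr; linarith
      _ ≤ c * (x * (999 / 1000 * (1 - (1 / 2) ^ #A))) := by gcongr
      _ = (1 - (1 / 2) ^ #A) * (c * (999 / 1000 * x)) := by ring
      _ ≤ (1 - (1 / 2) ^ #A) * (c * (x - 1)) := by
          gcongr
          nlinarith
      _ ≤ (1 - (1 / 2) ^ #A) * #M := by gcongr
  · intro j hj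
    rw [le_div_iff₀ (by positivity)]
    refine le_trans ?_ hcard
    rcases hj.eq_or_lt with rfl | hj
    · calc #(level r M L 2) * (2 : ℝ) ^ 2
          ≤ c * (x * (49 / 200) + (#L : ℝ) ^ 2 / 2) * 2 ^ 2 := by gcongr
        _ = c * (98 / 100 * x + 2 * (#L : ℝ) ^ 2) := by ring
        _ ≤ c * (x - 1) := by gcongr; nlinarith
    · exact (hlarge j hj).trans (by gcongr; nlinarith)

end LevelBounds

section Sieve

variable {A B L : Finset ℕ} {k N : ℕ}

theorem card_level_cell_Ico_le (hA : ∀ p ∈ A, p.Prime) (hB : ∀ p ∈ B, p.Prime)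
    (hL : ∀ p ∈ L, p.Prime) (hAB : Disjoint A B) (hAL : Disjoint A L) (hBL : Disjoint B L)
    (j : ℕ) :
    (#(level (· ∣ ·) (cell (· ∣ ·) (Ico k (k + N)) A B) L j) : ℝ) ≤
      (∏ p ∈ B, (p - 1) : ℕ) * (N / ((∏ p ∈ A, p) * (∏ p ∈ B, p) : ℕ) *
        ((∑ p ∈ L, 1 / (p : ℝ)) ^ j / j !) + (#L).choose j) := by
  set c : ℝ := ((∏ p ∈ B, (p - 1) : ℕ) : ℝ)
  set x : ℝ := N / ((∏ p ∈ A, p) * (∏ p ∈ B, p) : ℕ) with hx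
  have hcell : ∀ T ⊆ L, (#(cell (· ∣ ·) (Ico k (k + N)) (A ∪ T) B) : ℝ) ≤
      c * x * ∏ p ∈ T, (1 / (p : ℝ)) + c := fun T hT => by
    have h := card_cell_Ico_le (A := A ∪ T) k N (by grind) hB
      (disjoint_union_left.2 ⟨hAB, (hBL.mono_right hT).symm⟩)
    rw [prod_union (hAL.mono_right hT)] at h
    refine h.trans_eq ?_
    rw [hx, prod_div_distrib, prod_const_one, ← Nat.cast_prod, Nat.cast_mul, Nat.cast_mul,
      Nat.cast_mul]
    ring
  exact (card_level_cell_le (fun p _ => by positivity) (by positivity) hcell).trans_eq (by ring)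

theorem card_level_cell_Ico_le_of_card_multiples_le {y : ℕ} (hy : 1 ≤ y)
    (hA : ∀ p ∈ A, p.Prime) (hB : ∀ p ∈ B, p.Prime) (hL : ∀ p ∈ L, p.Prime)
    (hBy : ∀ p ∈ B, p ≤ y) (hAL : Disjoint A L)
    (hmul : ∀ T ⊆ A ∪ L, (∏ p ∈ T, p) * #{m ∈ Ico k (k + N) | ∏ p ∈ T, p ∣ m} ≤ 2 * N)
    (j : ℕ) :
    (#(level (· ∣ ·) (cell (· ∣ ·) (Ico k (k + N)) A B) L j) : ℝ) ≤
      (∏ p ∈ B, (p - 1) : ℕ) * (2 * y * (N / ((∏ p ∈ A, p) * (∏ p ∈ B, p) : ℕ)) *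
        ((∑ p ∈ L, 1 / (p : ℝ)) ^ j / j !)) := by
  have hA0 : 0 < ∏ p ∈ A, p := prod_pos fun p hp => (hA p hp).pos
  have hB0 : 0 < ∏ p ∈ B, p := prod_pos fun p hp => (hB p hp).pos
  have hcell : ∀ T ⊆ L, (#(cell (· ∣ ·) (Ico k (k + N)) (A ∪ T) B) : ℝ) ≤
      2 * N / (∏ p ∈ A, p : ℕ) * ∏ p ∈ T, (1 / (p : ℝ)) + 0 := fun T hT => by
    have hT0 : 0 < ∏ p ∈ T, p := prod_pos fun p hp => (hL p (hT hp)).pos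
    have hsub : cell (· ∣ ·) (Ico k (k + N)) (A ∪ T) B ⊆
        {m ∈ Ico k (k + N) | ∏ p ∈ A ∪ T, p ∣ m} := by
      rw [← cell_dvd_empty _ (by grind)]
      intro m
      grind [cell]
    have h := (Nat.mul_le_mul_left _ (card_le_card hsub)).trans
      (hmul (A ∪ T) (union_subset_union_right hT))
    rw [prod_union (hAL.mono_right hT)] at h
    rw [add_zero, prod_div_distrib, prod_const_one, ← Nat.cast_prod, div_mul_div_comm, mul_one,
      le_div_iff₀ (by positivity), mul_comm]
    exact_mod_cast h
  have hBprod : (∏ p ∈ B, p : ℕ) ≤ (y : ℝ) * (∏ p ∈ B, (p - 1) : ℕ) := mod_cast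
    prod_le_mul_prod_sub_one hy fun p hp => mem_Icc.2 ⟨(hB p hp).two_le, hBy p hp⟩
  calc (#(level (· ∣ ·) (cell (· ∣ ·) (Ico k (k + N)) A B) L j) : ℝ)
      ≤ 2 * N / (∏ p ∈ A, p : ℕ) * ((∑ p ∈ L, 1 / (p : ℝ)) ^ j / j !) := by
        simpa using card_level_cell_le (fun p _ => by positivity) (by positivity) hcell
    _ = (∏ p ∈ B, p : ℕ) * (2 * (N / ((∏ p ∈ A, p) * (∏ p ∈ B, p) : ℕ)) *
          ((∑ p ∈ L, 1 / (p : ℝ)) ^ j / j !)) := by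
        rw [Nat.cast_mul]; field_simp
    _ ≤ (y * (∏ p ∈ B, (p - 1) : ℕ)) * (2 * (N / ((∏ p ∈ A, p) * (∏ p ∈ B, p) : ℕ)) *
          ((∑ p ∈ L, 1 / (p : ℝ)) ^ j / j !)) := by gcongr
    _ = _ := by ring

end Sieve

/-! ### Admissible parameters -/

theorem pow_le_mul_factorial {a C : ℝ} {m j : ℕ} (ha : 0 ≤ a) (ham : a ≤ m + 1)
    (h : a ^ m ≤ C * m !) (hmj : m ≤ j) : a ^ j ≤ C * j ! := by
  induction j, hmj using Nat.le_induction with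
  | base => exact h
  | succ j hmj ih =>
    calc a ^ (j + 1) = a ^ j * a := pow_succ a j
      _ ≤ C * j ! * (j + 1) := by
        gcongr
        · exact (pow_nonneg ha j).trans ih
        · exact ham.trans (by gcongr)
      _ = C * (j + 1)! := by rw [Nat.factorial_succ]; push_cast; ring

/-- Numerical conditions under which `K` odd primes are dominated on intervals of length `2 ^ K`.
Primes up to `y` count as small and are sieved exactly; among the remaining ones, the events that
at least `j` of them divide are estimated with rounding errors for `j ≤ J` and, for `j > J`, by
bounds for the number of multiples alone. -/
structure Admissible (y J K : ℕ) : Prop where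
  thirteen_le : 13 ≤ y
  sum_inv_le : ∀ L : Finset ℕ, (∀ p ∈ L, p.Prime ∧ y < p) → #L ≤ K →
    ∑ p ∈ L, 1 / (p : ℝ) ≤ 7 / 10
  sq_mul_primorial_le : 2000 * (K ^ 2 + 1) * primorial y ≤ 2 ^ K
  pow_mul_primorial_le : ∀ j, 3 ≤ j → j ≤ J → (2 * K) ^ j * 4 * primorial y ≤ j ! * 2 ^ K
  mul_pow_le_factorial : ∀ j, J < j → 2 * y * (7 / 5 : ℝ) ^ j ≤ 99 / 100 * j !

theorem prod_mul_prod_pos {A B : Finset ℕ} (hA : ∀ p ∈ A, p.Prime) (hB : ∀ p ∈ B, p.Prime) :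
    0 < (∏ p ∈ A, p) * ∏ p ∈ B, p :=
  Nat.mul_pos (prod_pos fun p hp => (hA p hp).pos) (prod_pos fun p hp => (hB p hp).pos)

theorem prod_mul_prod_le_primorial {A B : Finset ℕ} {y : ℕ} (hA : ∀ p ∈ A, p.Prime ∧ p ≤ y)
    (hB : ∀ p ∈ B, p.Prime ∧ p ≤ y) (hAB : Disjoint A B) :
    (∏ p ∈ A, p) * ∏ p ∈ B, p ≤ primorial y := by
  rw [← prod_union hAB, primorial]
  exact prod_le_prod_of_subset_of_one_le' (by grind) fun p hp _ => (mem_filter.1 hp).2.one_le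

theorem disjoint_of_le_of_lt {S L : Finset ℕ} {y : ℕ} (hS : ∀ p ∈ S, p.Prime ∧ p ≤ y)
    (hL : ∀ p ∈ L, p.Prime ∧ y < p) : Disjoint S L :=
  disjoint_left.2 fun p hpS hpL => ((hS p hpS).2.trans_lt (hL p hpL).2).false

namespace Admissible

variable {y J K : ℕ} {A B L : Finset ℕ}

theorem choose_mul_two_pow_le (h : Admissible y J K) {j l : ℕ} (hj : 3 ≤ j) (hjJ : j ≤ J)
    (hl : l ≤ K) : (l.choose j : ℝ) * 2 ^ j ≤ (2 ^ K : ℕ) / primorial y / 4 := by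
  have hprimorial : (0 : ℝ) < primorial y := mod_cast primorial_pos y
  have hpow : ((2 * K : ℝ) ^ j) * 4 * primorial y ≤ j ! * (2 ^ K : ℕ) :=
    mod_cast h.pow_mul_primorial_le j hj hjJ
  calc (l.choose j : ℝ) * 2 ^ j
      ≤ (K : ℝ) ^ j / j ! * 2 ^ j := by
        gcongr
        exact (Nat.choose_le_pow_div j l).trans (by gcongr)
    _ = (2 * K) ^ j / j ! := by rw [mul_pow]; ring
    _ ≤ (2 ^ K : ℕ) / primorial y / 4 := by
        rw [div_div, div_le_div_iff₀ (by positivity) (by positivity)]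
        linarith

theorem card_level_mul_two_pow_le (h : Admissible y J K) {k j : ℕ} (hj : 3 ≤ j)
    (hA : ∀ p ∈ A, p.Prime ∧ p ≤ y) (hB : ∀ p ∈ B, p.Prime ∧ p ≤ y) (hAB : Disjoint A B)
    (hL : ∀ p ∈ L, p.Prime ∧ y < p) (hLK : #L ≤ K)
    (hmul : ∀ T ⊆ A ∪ L,
      (∏ p ∈ T, p) * #{m ∈ Ico k (k + 2 ^ K) | ∏ p ∈ T, p ∣ m} ≤ 2 * 2 ^ K) :
    #(level (· ∣ ·) (cell (· ∣ ·) (Ico k (k + 2 ^ K)) A B) L j) * (2 : ℝ) ^ j ≤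
      (∏ p ∈ B, (p - 1) : ℕ) *
        (99 / 100 * ((2 ^ K : ℕ) / ((∏ p ∈ A, p) * (∏ p ∈ B, p) : ℕ))) := by
  have hsum := h.sum_inv_le L hL hLK
  have hAprime : ∀ p ∈ A, p.Prime := fun p hp => (hA p hp).1
  have hBprime : ∀ p ∈ B, p.Prime := fun p hp => (hB p hp).1
  have hLprime : ∀ p ∈ L, p.Prime := fun p hp => (hL p hp).1
  have hAL : Disjoint A L := disjoint_of_le_of_lt hA hL
  have hBL : Disjoint B L := disjoint_of_le_of_lt hB hL
  have hD0 := prod_mul_prod_pos hAprime hBprime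
  have hD := prod_mul_prod_le_primorial hA hB hAB
  set c : ℝ := ((∏ p ∈ B, (p - 1) : ℕ) : ℝ)
  set x : ℝ := (2 ^ K : ℕ) / ((∏ p ∈ A, p) * (∏ p ∈ B, p) : ℕ) with hx
  have hpow : (7 / 10 : ℝ) ^ j * 2 ^ j = (7 / 5) ^ j := by rw [← mul_pow]; norm_num
  rcases le_or_gt j J with hjJ | hjJ
  · have hmain : (7 / 5 : ℝ) ^ j / j ! ≤ 46 / 100 :=
      (div_le_iff₀ (by positivity)).2 <|
        pow_le_mul_factorial (by norm_num) (by norm_num) (by norm_num [Nat.factorial]) hj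
    have hround : ((#L).choose j : ℝ) * 2 ^ j ≤ x / 4 :=
      (h.choose_mul_two_pow_le hj hjJ hLK).trans (by rw [hx]; gcongr)
    calc _ ≤ c * (x * ((∑ p ∈ L, 1 / (p : ℝ)) ^ j / j !) + (#L).choose j) * 2 ^ j := by
            gcongr
            exact card_level_cell_Ico_le hAprime hBprime hLprime hAB hAL hBL j
      _ ≤ c * (x * ((7 / 10) ^ j / j !) + (#L).choose j) * 2 ^ j := by gcongr
      _ = c * (x * ((7 / 5) ^ j / j !) + (#L).choose j * 2 ^ j) := by rw [← hpow]; ring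
      _ ≤ c * (x * (46 / 100) + x / 4) := by gcongr
      _ ≤ c * (99 / 100 * x) := by
            have : 0 ≤ x := by positivity
            gcongr
            linarith
  · have hy : 1 ≤ y := le_trans (by norm_num) h.thirteen_le
    calc _ ≤ c * (2 * y * x * ((∑ p ∈ L, 1 / (p : ℝ)) ^ j / j !)) * 2 ^ j := by
            gcongr
            exact card_level_cell_Ico_le_of_card_multiples_le hy hAprime hBprime hLprime
              (fun p hp => (hB p hp).2) hAL hmul j
      _ ≤ c * (2 * y * x * ((7 / 10) ^ j / j !)) * 2 ^ j := by gcongr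
      _ = c * (2 * y * (7 / 5) ^ j / j ! * x) := by rw [← hpow]; ring
      _ ≤ c * (99 / 100 * x) := by
            have := (div_le_iff₀ (by positivity)).2 (h.mul_pow_le_factorial j hjJ)
            gcongr

theorem dominated_cell (h : Admissible y J K) {k : ℕ}
    (hA : ∀ p ∈ A, p.Prime ∧ p ≤ y) (hB : ∀ p ∈ B, p.Prime ∧ p ≤ y) (hAB : Disjoint A B)
    (hL : ∀ p ∈ L, p.Prime ∧ y < p) (hLK : #L ≤ K)
    (hmul : ∀ T ⊆ A ∪ L,
      (∏ p ∈ T, p) * #{m ∈ Ico k (k + 2 ^ K) | ∏ p ∈ T, p ∣ m} ≤ 2 * 2 ^ K) :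
    Dominated (· ∣ ·) (cell (· ∣ ·) (Ico k (k + 2 ^ K)) A B) L := by
  have hAprime : ∀ p ∈ A, p.Prime := fun p hp => (hA p hp).1
  have hBprime : ∀ p ∈ B, p.Prime := fun p hp => (hB p hp).1
  have hAL : Disjoint A L := disjoint_of_le_of_lt hA hL
  have hBL : Disjoint B L := disjoint_of_le_of_lt hB hL
  have hsum := h.sum_inv_le L hL hLK
  have hlevel {L' : Finset ℕ} (hL' : L' ⊆ L) (j : ℕ) :=
    card_level_cell_Ico_le (k := k) (N := 2 ^ K) hAprime hBprime
      (fun p hp => (hL p (hL' hp)).1) hAB (hAL.mono_right hL') (hBL.mono_right hL') j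
  set c : ℝ := ((∏ p ∈ B, (p - 1) : ℕ) : ℝ)
  set x : ℝ := (2 ^ K : ℕ) / ((∏ p ∈ A, p) * (∏ p ∈ B, p) : ℕ) with hx
  have hx_large : 2000 * ((#L : ℝ) ^ 2 + 1) ≤ x := by
    rw [hx, le_div_iff₀ (mod_cast prod_mul_prod_pos hAprime hBprime)]
    have hle : 2000 * (#L ^ 2 + 1) * ((∏ p ∈ A, p) * ∏ p ∈ B, p) ≤ 2 ^ K := by
      refine le_trans ?_ h.sq_mul_primorial_le
      gcongr
      exact prod_mul_prod_le_primorial hA hB hAB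
    exact_mod_cast hle
  refine dominated_of_card_level_le (w := fun p => 1 / (p : ℝ)) (Nat.cast_nonneg _) hx_large
    (le_card_cell_Ico k _ hAprime hBprime hAB) (fun p _ => by positivity) ?_ hsum ?_ ?_ ?_
  · intro p hp
    have : (14 : ℝ) ≤ p := mod_cast h.thirteen_le.trans_lt (hL p hp).2
    gcongr
  · intro A' hA'
    simpa only [pow_one, Nat.factorial_one, Nat.cast_one, div_one, Nat.choose_one_right]
      using hlevel hA' 1
  · have hpow : (∑ p ∈ L, 1 / (p : ℝ)) ^ 2 / 2 ! ≤ 49 / 200 :=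
      calc (∑ p ∈ L, 1 / (p : ℝ)) ^ 2 / 2 ! ≤ (7 / 10) ^ 2 / 2 ! := by gcongr
        _ = 49 / 200 := by norm_num
    have hchoose : ((#L).choose 2 : ℝ) ≤ (#L : ℝ) ^ 2 / 2 :=
      (Nat.choose_le_pow_div 2 #L).trans_eq (by norm_num)
    exact (hlevel Subset.rfl 2).trans (by gcongr)
  · exact fun j hj => h.card_level_mul_two_pow_le hj hA hB hAB hL hLK hmul

theorem three_mul_primorial_le (h : Admissible y J K) : 3 * primorial y ≤ 2 ^ K :=
  le_trans (Nat.mul_le_mul_right _ (by lia)) h.sq_mul_primorial_le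

theorem dominated_Ico (h : Admissible y J K) {G : Finset ℕ} {k : ℕ} (hG : ∀ p ∈ G, p.Prime)
    (hG_two : 2 ∉ G) (hGK : #G ≤ K)
    (hmul : ∀ T ⊆ G, (∏ p ∈ T, p) * #{m ∈ Ico k (k + 2 ^ K) | ∏ p ∈ T, p ∣ m} ≤ 2 * 2 ^ K) :
    Dominated (· ∣ ·) (Ico k (k + 2 ^ K)) G := by
  rw [← filter_union_filter_not_eq (· ≤ y) G]
  set S := {p ∈ G | p ≤ y}
  set L := {p ∈ G | ¬ p ≤ y}
  have hS : ∀ p ∈ S, p.Prime ∧ p ≤ y := by grind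
  have hL : ∀ p ∈ L, p.Prime ∧ y < p := by grind
  apply dominated_union_of_cell (disjoint_of_le_of_lt hS hL)
  · intro p hp A hA B hB hAB
    refine card_cell_Ico_insert_le (hS p hp).1 (by grind) (by grind) (by grind) hAB (by grind)
      (by grind) (le_trans ?_ h.three_mul_primorial_le)
    have hle := prod_mul_prod_le_primorial (A := insert p A) (B := B) (y := y)
      (by grind) (by grind) (disjoint_insert_left.2 ⟨by grind, hAB⟩)
    rw [prod_insert (by grind), mul_assoc] at hle
    gcongr
  · intro A hA
    exact h.dominated_cell (by grind) (by grind) disjoint_sdiff hL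
      ((card_le_card (filter_subset _ _)).trans hGK) fun T hT => hmul T (by grind)

end Admissible

/-! ### Sums of reciprocals -/

theorem sum_le_sum_of_card_le {ι : Type*} [DecidableEq ι] {L C : Finset ι} {f : ι → ℝ} {t : ℝ}
    (hcard : #L ≤ #C) (ht : 0 ≤ t) (hL : ∀ i ∈ L \ C, f i ≤ t) (hC : ∀ i ∈ C \ L, t ≤ f i) :
    ∑ i ∈ L, f i ≤ ∑ i ∈ C, f i := by
  rw [← sum_sdiff_le_sum_sdiff]
  calc ∑ i ∈ L \ C, f i ≤ #(L \ C) • t := sum_le_card_nsmul _ _ _ hL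
    _ ≤ #(C \ L) • t := nsmul_le_nsmul_left ht (card_sdiff_le_card_sdiff_iff.2 hcard)
    _ ≤ ∑ i ∈ C \ L, f i := card_nsmul_le_sum _ _ _ hC

theorem sum_inv_le_sum_inv_coprime {L : Finset ℕ} {m y z : ℕ}
    (hL : ∀ n ∈ L, y < n ∧ m.Coprime n) (hcard : #L ≤ #{n ∈ Ioc y z | m.Coprime n}) :
    ∑ n ∈ L, 1 / (n : ℝ) ≤ ∑ n ∈ Ioc y z with m.Coprime n, 1 / (n : ℝ) := by
  refine sum_le_sum_of_card_le (t := 1 / ((z + 1 : ℕ) : ℝ)) hcard (by positivity) ?_ ?_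
  · intro n hn
    have : z + 1 ≤ n := by grind
    gcongr
  · intro n hn
    have hn_pos : 0 < n := by grind
    have : n ≤ z + 1 := by grind
    gcongr

theorem sum_inv_le_div {C : Finset ℕ} {a m : ℕ} (hm : 0 < m) (h : ∑ n ∈ C, (m / n + 1) ≤ a) :
    ∑ n ∈ C, 1 / (n : ℝ) ≤ a / m := by
  rw [le_div_iff₀ (by positivity), sum_mul]
  calc ∑ n ∈ C, 1 / (n : ℝ) * m ≤ ∑ n ∈ C, ((m / n + 1 : ℕ) : ℝ) := by
        gcongr with n
        rw [one_div_mul_eq_div, ← Nat.floor_div_eq_div (K := ℝ), Nat.cast_add_one]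
        exact (Nat.lt_floor_add_one _).le
    _ ≤ a := mod_cast h

theorem coprime_primorial {y p : ℕ} (hp : p.Prime) (hyp : y < p) : (primorial y).Coprime p :=
  Nat.Coprime.symm <| (hp.coprime_iff_not_dvd).2 fun h => hyp.not_ge (hp.dvd_primorial_iff.1 h)

/-- The density is `φ(30) / 30 = 4 / 15`; the offsets are extreme discrepancies on a period. -/
theorem count_coprime_thirty (m : ℕ) : 4 * m ≤ 15 * Nat.count (Nat.Coprime 30) m + 14 ∧
    15 * Nat.count (Nat.Coprime 30) m ≤ 4 * m + 10 := by
  induction m using Nat.strong_induction_on with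
  | h m ih =>
    have hperiod : ∀ m < 30, 4 * m ≤ 15 * Nat.count (Nat.Coprime 30) m + 14 ∧
        15 * Nat.count (Nat.Coprime 30) m ≤ 4 * m + 10 := by decide +kernel
    have hcount : Nat.count (Nat.Coprime 30) 30 = 8 := by decide +kernel
    rcases lt_or_ge m 30 with hm | hm
    · exact hperiod m hm
    · obtain ⟨m, rfl⟩ := Nat.exists_eq_add_of_le hm
      rw [Nat.count_add, hcount]
      simp only [Nat.coprime_self_add_right]
      have := ih m (by lia)
      lia

theorem card_filter_Ioc_coprime_thirty_le {a b : ℕ} (hab : a ≤ b) :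
    15 * #{n ∈ Ioc a b | Nat.Coprime 30 n} + 4 * a ≤ 4 * b + 24 := by
  have hcount : Nat.count (Nat.Coprime 30) (b + 1) =
      Nat.count (Nat.Coprime 30) (a + 1) + #{n ∈ Ioc a b | Nat.Coprime 30 n} := by
    rw [Nat.count_eq_card_filter_range, Nat.count_eq_card_filter_range,
      ← card_union_of_disjoint (by grind [disjoint_left])]
    congr 1
    grind
  have ha := (count_coprime_thirty (a + 1)).1
  have hb := (count_coprime_thirty (b + 1)).2
  lia

theorem inv_le_log_sub_log {b t : ℝ} (hb : 0 < b) (ht : 0 < t) :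
    1 / (b + t) ≤ (Real.log (b + t) - Real.log b) / t := by
  rw [le_div_iff₀ ht, ← Real.log_div (by positivity) hb.ne']
  refine le_trans (le_of_eq ?_) (Real.one_sub_inv_le_log_of_pos (by positivity))
  field_simp
  ring

/-- The `i`-th smallest element of `L` is at least `y - 6 + 15 / 4 * i`. -/
theorem sum_inv_le_log_sub_log {y : ℕ} (hy : 7 ≤ y) {L : Finset ℕ}
    (hL : ∀ n ∈ L, y < n ∧ Nat.Coprime 30 n) :
    ∑ n ∈ L, 1 / (n : ℝ) ≤
      (Real.log (y - 6 + 15 / 4 * #L) - Real.log (y - 6)) / (15 / 4) := by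
  induction L using Finset.induction_on_max with
  | empty => simp
  | insert n L hmax ih =>
    have hnL : n ∉ L := fun h => (hmax n h).false
    rw [forall_mem_insert] at hL
    have hcard : #(insert n L) ≤ #{m ∈ Ioc y n | Nat.Coprime 30 m} := card_le_card (by grind)
    have hdensity := card_filter_Ioc_coprime_thirty_le hL.1.1.le
    rw [card_insert_of_notMem hnL] at hcard
    rw [sum_insert hnL, card_insert_of_notMem hnL]
    have hy' : (7 : ℝ) ≤ y := mod_cast hy
    set b : ℝ := y - 6 + 15 / 4 * #L with hb
    have hb_pos : 0 < b := by
      have : (0 : ℝ) ≤ #L := Nat.cast_nonneg _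
      linarith
    have hbn : b + 15 / 4 ≤ n := by
      have : (15 * (#L + 1) + 4 * y : ℝ) ≤ 4 * n + 24 := mod_cast (by lia)
      linarith
    calc 1 / (n : ℝ) + ∑ n ∈ L, 1 / (n : ℝ)
        ≤ 1 / (b + 15 / 4) + (Real.log b - Real.log (y - 6)) / (15 / 4) := by
          gcongr
          exact ih hL.2
      _ ≤ (Real.log (b + 15 / 4) - Real.log b) / (15 / 4) +
          (Real.log b - Real.log (y - 6)) / (15 / 4) :=
          add_le_add (inv_le_log_sub_log hb_pos (by norm_num)) le_rfl
      _ = _ := by rw [hb]; push_cast; ring_nf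

theorem log_le_twentyOne_div_eight : Real.log (27 / 2) ≤ 21 / 8 := by
  have hpow : (27 / 2 : ℝ) ^ 8 ≤ Real.exp 21 :=
    calc (27 / 2 : ℝ) ^ 8 ≤ (2.7182 : ℝ) ^ 21 := by norm_num
      _ ≤ Real.exp 1 ^ 21 := by
        gcongr
        linarith [Real.exp_one_gt_d9]
      _ = Real.exp 21 := by rw [← Real.exp_nat_mul]; norm_num
  have hlog := Real.log_le_log (by norm_num) hpow
  rw [Real.log_exp, Real.log_pow] at hlog
  push_cast at hlog
  linarith

/-! ### Choice of parameters -/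

theorem mul_seven_fifths_pow_le_factorial {y J : ℕ} (hy : 0 < y)
    (h : 2 * y * (7 / 5 : ℝ) ^ (J + 1) ≤ 99 / 100 * (J + 1)!) {j : ℕ} (hj : J < j) :
    2 * y * (7 / 5 : ℝ) ^ j ≤ 99 / 100 * j ! := by
  have : (0 : ℝ) ≤ J := Nat.cast_nonneg _
  have hpow := pow_le_mul_factorial (a := 7 / 5) (C := 99 / 100 / (2 * y)) (m := J + 1)
    (by norm_num) (by push_cast; linarith)
    (by rw [div_mul_eq_mul_div, le_div_iff₀ (by positivity)]; linarith) hj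
  rw [div_mul_eq_mul_div, le_div_iff₀ (by positivity)] at hpow
  linarith

theorem two_thousand_mul_sq_add_one_le_two_pow {y : ℕ} (hy : 66 ≤ y) :
    2000 * ((3 * y + 2) ^ 2 + 1) ≤ 2 ^ y := by
  induction y, hy using Nat.le_induction with
  | base => norm_num
  | succ y hy ih => rw [pow_succ 2]; nlinarith

theorem three_mul_add_three_le_two_pow {J : ℕ} (hJ : 9 ≤ J) : 3 * ((J + 2) * J + 3) ≤ 2 ^ J := by
  induction J, hJ using Nat.le_induction with
  | base => norm_num
  | succ J hJ ih => rw [pow_succ 2]; nlinarith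

theorem log_mul_log_le_div_three {K : ℕ} (hK : 198 ≤ K) :
    (Nat.log 2 K + 2) * Nat.log 2 K + 2 ≤ K / 3 := by
  have hlog : 2 ^ Nat.log 2 K ≤ K := Nat.pow_log_le_self 2 (by lia)
  have hlog_ge : 7 ≤ Nat.log 2 K := Nat.le_log_of_pow_le (by norm_num) (by lia)
  rcases le_or_gt 9 (Nat.log 2 K) with h | h
  · have := three_mul_add_three_le_two_pow h
    lia
  · interval_cases Nat.log 2 K <;> lia

namespace Admissible

theorem of_coprime_primorial {y z J K m : ℕ} (hy : 13 ≤ y) (hm : primorial y = m)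
    (hcard : K ≤ #{n ∈ Ioc y z | m.Coprime n})
    (hsum : ∑ n ∈ Ioc y z with m.Coprime n, (10 ^ 7 / n + 1) ≤ 7 * 10 ^ 6)
    (hsq : 2000 * (K ^ 2 + 1) * m ≤ 2 ^ K)
    (hpow : ∀ j ∈ Icc 3 J, (2 * K) ^ j * 4 * m ≤ j ! * 2 ^ K)
    (htail : 2 * y * (7 / 5 : ℝ) ^ (J + 1) ≤ 99 / 100 * (J + 1)!) : Admissible y J K where
  thirteen_le := hy
  sum_inv_le L hL hLK := by
    have hcoprime : ∀ p ∈ L, y < p ∧ m.Coprime p := fun p hp =>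
      ⟨(hL p hp).2, hm ▸ coprime_primorial (hL p hp).1 (hL p hp).2⟩
    calc ∑ p ∈ L, 1 / (p : ℝ) ≤ ∑ n ∈ Ioc y z with m.Coprime n, 1 / (n : ℝ) :=
          sum_inv_le_sum_inv_coprime hcoprime (hLK.trans hcard)
      _ ≤ (7 * 10 ^ 6 : ℕ) / (10 ^ 7 : ℕ) := sum_inv_le_div (by norm_num) hsum
      _ = 7 / 10 := by norm_num
  sq_mul_primorial_le := hm ▸ hsq
  pow_mul_primorial_le j hj hjJ := hm ▸ hpow j (mem_Icc.2 ⟨hj, hjJ⟩)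
  mul_pow_le_factorial _ hj := mul_seven_fifths_pow_le_factorial (by lia) htail hj

theorem thirteen {K : ℕ} (hK : K ∈ Icc 44 66) : Admissible 13 5 K := by
  have hsq : ∀ K ∈ Icc 44 66, 2000 * (K ^ 2 + 1) * 30030 ≤ 2 ^ K := by decide +kernel
  have hpow : ∀ K ∈ Icc 44 66, ∀ j ∈ Icc 3 5, (2 * K) ^ j * 4 * 30030 ≤ j ! * 2 ^ K := by
    decide +kernel
  have hcard : 66 ≤ #{n ∈ Ioc 13 349 | Nat.Coprime 30030 n} := by decide +kernel
  exact of_coprime_primorial (z := 349) le_rfl (by decide +kernel)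
    ((mem_Icc.1 hK).2.trans hcard) (by decide +kernel) (hsq K hK) (hpow K hK)
    (by norm_num [Nat.factorial])

theorem twentyNine {K : ℕ} (hK : K ∈ Icc 67 197) : Admissible 29 5 K := by
  have hsq : ∀ K ∈ Icc 67 197, 2000 * (K ^ 2 + 1) * 6469693230 ≤ 2 ^ K := by decide +kernel
  have hpow : ∀ K ∈ Icc 67 197, ∀ j ∈ Icc 3 5, (2 * K) ^ j * 4 * 6469693230 ≤ j ! * 2 ^ K := by
    decide +kernel
  have hcard : 197 ≤ #{n ∈ Ioc 29 1259 | Nat.Coprime 6469693230 n} := by decide +kernel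
  exact of_coprime_primorial (z := 1259) (by norm_num) (by decide +kernel)
    ((mem_Icc.1 hK).2.trans hcard) (by decide +kernel) (hsq K hK) (hpow K hK)
    (by norm_num [Nat.factorial])

theorem sum_inv_le_of_div_three {K : ℕ} (hK : 198 ≤ K) {L : Finset ℕ}
    (hL : ∀ p ∈ L, p.Prime ∧ K / 3 < p) (hLK : #L ≤ K) : ∑ p ∈ L, 1 / (p : ℝ) ≤ 7 / 10 := by
  have hcoprime : ∀ p ∈ L, K / 3 < p ∧ Nat.Coprime 30 p := fun p hp =>
    ⟨(hL p hp).2, Nat.Coprime.coprime_dvd_left (by decide +kernel : 30 ∣ primorial 5)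
      (coprime_primorial (hL p hp).1 (by have := (hL p hp).2; lia))⟩
  refine (sum_inv_le_log_sub_log (by lia) hcoprime).trans ?_
  have hy : (66 : ℝ) ≤ (K / 3 : ℕ) := mod_cast (by lia)
  have hcard : (#L : ℝ) ≤ 3 * (K / 3 : ℕ) + 2 := mod_cast (by lia)
  set y : ℝ := ((K / 3 : ℕ) : ℝ)
  have hy_pos : 0 < y - 6 := by linarith
  have hlog : Real.log (y - 6 + 15 / 4 * #L) - Real.log (y - 6) ≤ 21 / 8 := by
    rw [← Real.log_div (by positivity) hy_pos.ne']
    refine le_trans (Real.log_le_log (by positivity) ?_) log_le_twentyOne_div_eight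
    rw [div_le_iff₀ hy_pos]
    linarith
  linarith

theorem div_three {K : ℕ} (hK : 198 ≤ K) : Admissible (K / 3) (Nat.log 2 K) K := by
  have hlog : K < 2 ^ (Nat.log 2 K + 1) := Nat.lt_pow_succ_log_self (by norm_num) K
  have hlog_ge : 7 ≤ Nat.log 2 K := Nat.le_log_of_pow_le (by norm_num) (by lia)
  have hpow_log := log_mul_log_le_div_three hK
  set J := Nat.log 2 K
  set y := K / 3
  have hprimorial : 2 ^ y * primorial y ≤ 2 ^ K :=
    calc 2 ^ y * primorial y ≤ 2 ^ y * (2 ^ 2) ^ y := by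
          gcongr
          exact primorial_le_four_pow y
      _ = 2 ^ (y + 2 * y) := by rw [← pow_mul, ← pow_add]
      _ ≤ 2 ^ K := Nat.pow_le_pow_right two_pos (by lia)
  refine ⟨by lia, fun L => sum_inv_le_of_div_three hK, ?_, fun j _ hjJ => ?_, fun j hj => ?_⟩
  · refine le_trans (Nat.mul_le_mul_right _ ?_) hprimorial
    refine le_trans ?_ (two_thousand_mul_sq_add_one_le_two_pow (by lia))
    gcongr
    lia
  · have hpow : (2 * K) ^ j * 4 ≤ 2 ^ y :=
      calc (2 * K) ^ j * 4 ≤ (2 ^ (J + 2)) ^ J * 4 := by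
            gcongr ?_ * 4
            exact (Nat.pow_le_pow_left (by rw [pow_succ]; lia) j).trans
              (Nat.pow_le_pow_right (by positivity) hjJ)
        _ = 2 ^ ((J + 2) * J + 2) := by rw [← pow_mul, pow_add _ _ 2]; norm_num
        _ ≤ 2 ^ y := Nat.pow_le_pow_right two_pos hpow_log
    calc (2 * K) ^ j * 4 * primorial y ≤ 2 ^ K := (Nat.mul_le_mul_right _ hpow).trans hprimorial
      _ ≤ j ! * 2 ^ K := Nat.le_mul_of_pos_left _ j.factorial_pos
  · have hy_le : (2 * y : ℝ) ≤ 2 ^ j := by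
      have : 2 ^ (J + 1) ≤ 2 ^ j := Nat.pow_le_pow_right two_pos hj
      exact_mod_cast (by lia : 2 * y ≤ 2 ^ j)
    calc 2 * y * (7 / 5 : ℝ) ^ j ≤ 2 ^ j * (7 / 5) ^ j := by gcongr
      _ = (14 / 5) ^ j := by rw [← mul_pow]; norm_num
      _ ≤ 99 / 100 * j ! := pow_le_mul_factorial (m := 8) (by norm_num) (by norm_num)
          (by norm_num [Nat.factorial]) (by lia)

end Admissible

theorem exists_admissible {K : ℕ} (hK : 44 ≤ K) : ∃ y J, Admissible y J K := by
  rcases le_or_gt K 66 with h66 | h66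
  · exact ⟨13, 5, .thirteen (by grind)⟩
  rcases le_or_gt K 197 with h197 | h197
  · exact ⟨29, 5, .twentyNine (by grind)⟩
  · exact ⟨K / 3, Nat.log 2 K, .div_three (by lia)⟩

/-! ### From intervals to matchings -/

theorem mul_card_filter_Icc_dvd_le (d n : ℕ) : d * #{m ∈ Icc 1 n | d ∣ m} ≤ n := by
  have hcard : #{m ∈ Icc 1 n | d ∣ m} = n / d := Nat.Ioc_filter_dvd_card_eq_div n d
  exact hcard ▸ Nat.mul_div_le n d

section OddPrimes

variable {G : Finset ℕ}

theorem dominated_Icc_of_two_notMem (hG : ∀ p ∈ G, p.Prime) (hG_two : 2 ∉ G) (hcard : 44 ≤ #G) :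
    Dominated (· ∣ ·) (Icc 1 (2 ^ #G)) G := by
  obtain ⟨y, J, h⟩ := exists_admissible hcard
  have hIcc : Ico 1 (1 + 2 ^ #G) = Icc 1 (2 ^ #G) := by grind
  rw [← hIcc]
  refine h.dominated_Ico hG hG_two le_rfl fun T _ => ?_
  rw [hIcc]
  exact (mul_card_filter_Icc_dvd_le _ _).trans (Nat.le_mul_of_pos_left _ two_pos)

theorem image_half_filter_two_dvd (N : ℕ) :
    {m ∈ Icc 1 (2 * N) | 2 ∣ m}.image (· / 2) = Icc 1 N := by
  ext x
  simp only [mem_image, mem_filter, mem_Icc]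
  exact ⟨by lia, fun hx => ⟨2 * x, by lia⟩⟩

theorem image_add_half_filter_not_two_dvd (k N : ℕ) :
    {m ∈ Icc 1 (2 * N) | ¬ 2 ∣ m}.image (k + · / 2) = Ico k (k + N) := by
  ext x
  simp only [mem_image, mem_filter, mem_Icc, mem_Ico]
  exact ⟨by lia, fun hx => ⟨2 * (x - k) + 1, by lia⟩⟩

theorem dominated_filter_two_dvd (hG : ∀ p ∈ G, p.Prime) (hG_two : 2 ∉ G) (hcard : 44 ≤ #G) :
    Dominated (· ∣ ·) {m ∈ Icc 1 (2 * 2 ^ #G) | 2 ∣ m} G := by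
  refine Dominated.of_image (g := (· / 2)) (fun m hm m' hm' heq => ?_) (fun m hm p hp => ?_)
    (image_half_filter_two_dvd _ ▸ dominated_Icc_of_two_notMem hG hG_two hcard)
  · grind
  · have hcop : p.Coprime 2 :=
      (Nat.coprime_primes (hG p hp) Nat.prime_two).2 (ne_of_mem_of_not_mem hp hG_two)
    rw [← hcop.dvd_mul_left, Nat.mul_div_cancel' (mem_filter.1 hm).2]

/-- Let `w` be the product of `G`. For odd `m` the number `(w + m) / 2` has the same divisors in `G`
as `m`, and it runs over an interval when `m` runs over the odd numbers of an interval. -/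
theorem dominated_filter_not_two_dvd (hG : ∀ p ∈ G, p.Prime) (hG_two : 2 ∉ G) (hcard : 44 ≤ #G) :
    Dominated (· ∣ ·) {m ∈ Icc 1 (2 * 2 ^ #G) | ¬ 2 ∣ m} G := by
  have hcop : ∀ p ∈ G, p.Coprime 2 := fun p hp =>
    (Nat.coprime_primes (hG p hp) Nat.prime_two).2 (ne_of_mem_of_not_mem hp hG_two)
  set w := ∏ p ∈ G, p
  have hw : w % 2 = 1 := Nat.odd_iff.1 (Nat.coprime_two_right.1 (Nat.Coprime.prod_left hcop))
  set k := (w + 1) / 2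
  have hdominated : Dominated (· ∣ ·) (Ico k (k + 2 ^ #G)) G := by
    obtain ⟨y, J, h⟩ := exists_admissible hcard
    refine h.dominated_Ico hG hG_two le_rfl fun T hT => ?_
    have hTw : ∏ p ∈ T, p ∣ w := prod_dvd_prod_of_subset _ _ _ hT
    refine le_trans (Nat.mul_le_mul_left _ ?_) (mul_card_filter_Icc_dvd_le _ _)
    refine card_le_card_of_injOn (2 * · - w) (fun m hm => ?_) fun m hm m' hm' heq => ?_
    · simp only [coe_filter, mem_Ico, mem_Icc, Set.mem_ofPred_eq] at hm ⊢
      exact ⟨by lia, Nat.dvd_sub (hm.2.mul_left 2) hTw⟩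
    · simp only [coe_filter, mem_Ico, Set.mem_ofPred_eq] at hm hm' heq
      lia
  refine Dominated.of_image (g := (k + · / 2)) (fun m hm m' hm' heq => ?_) (fun m hm p hp => ?_)
    (image_add_half_filter_not_two_dvd _ _ ▸ hdominated)
  · grind
  · have hdouble : 2 * (k + m / 2) = w + m := by grind
    have hpw : p ∣ w := dvd_prod_of_mem _ hp
    rw [← (hcop p hp).dvd_mul_left, hdouble, Nat.dvd_add_right hpw]

theorem dominated_Icc_insert_two (hG : ∀ p ∈ G, p.Prime) (hG_two : 2 ∉ G) (hcard : 44 ≤ #G) :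
    Dominated (· ∣ ·) (Icc 1 (2 * 2 ^ #G)) (insert 2 G) := by
  refine Dominated.insert_of_card_le hG_two ?_ (dominated_filter_two_dvd hG hG_two hcard)
    (dominated_filter_not_two_dvd hG hG_two hcard)
  have heven := mul_card_filter_Icc_dvd_le 2 (2 * 2 ^ #G)
  have htotal := card_filter_add_card_filter_not (s := Icc 1 (2 * 2 ^ #G)) (2 ∣ ·)
  rw [Nat.card_Icc] at htotal
  lia

end OddPrimes

theorem dominated_Icc_two_pow_card {G : Finset ℕ} (hG : ∀ p ∈ G, p.Prime)
    (hcard : 44 ≤ #(G.erase 2)) : Dominated (· ∣ ·) (Icc 1 (2 ^ #G)) G := by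
  by_cases htwo : 2 ∈ G
  · have h := dominated_Icc_insert_two (fun p hp => hG p (mem_of_mem_erase hp))
      (notMem_erase 2 G) hcard
    rwa [insert_erase htwo, ← pow_succ', card_erase_add_one htwo] at h
  · rw [erase_eq_of_notMem htwo] at hcard
    exact dominated_Icc_of_two_notMem hG htwo hcard

theorem bijOn_primeFactors_divisors {n : ℕ} (hn : Squarefree n) :
    Set.BijOn Nat.primeFactors n.divisors n.primeFactors.powerset := by
  refine ⟨fun d hd => ?_, fun d hd e he heq => ?_, fun T hT => ?_⟩
  · exact mem_powerset.2 (Nat.primeFactors_mono (Nat.dvd_of_mem_divisors hd) hn.ne_zero)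
  · rw [← Nat.prod_primeFactors_of_squarefree
        (hn.squarefree_of_dvd (Nat.dvd_of_mem_divisors hd)), heq,
      Nat.prod_primeFactors_of_squarefree (hn.squarefree_of_dvd (Nat.dvd_of_mem_divisors he))]
  · rw [mem_coe, mem_powerset] at hT
    refine ⟨∏ p ∈ T, p, Nat.mem_divisors.2 ⟨?_, hn.ne_zero⟩,
      Nat.primeFactors_prod fun p hp => Nat.prime_of_mem_primeFactors (hT hp)⟩
    exact (prod_dvd_prod_of_subset _ _ _ hT).trans (Nat.prod_primeFactors_dvd n)

theorem matchable_of_dominated {n : ℕ} (hn : Squarefree n)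
    (h : Dominated (· ∣ ·) (Icc 1 (2 ^ #n.primeFactors)) n.primeFactors) : Matchable n := by
  obtain ⟨f, hf, hf_dvd⟩ := h.exists_bijOn (by simp)
  have hbij := bijOn_primeFactors_divisors hn
  have hcard : #n.divisors = 2 ^ #n.primeFactors :=
    hbij.finsetCard_eq.trans (card_powerset _)
  refine ⟨f ∘ Nat.primeFactors, hcard ▸ hf.comp hbij, fun d hd => ?_⟩
  by_contra hgcd
  obtain ⟨p, hp, hpd, hpf⟩ := Nat.Prime.not_coprime_iff_dvd.1 hgcd
  exact hf_dvd _ (mem_powerset.1 (hbij.mapsTo hd)) p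
    (hp.mem_primeFactors hpd (Nat.pos_of_mem_divisors hd).ne') hpf

theorem stmt_4_general (n : ℕ) (hn : Squarefree n) (h : 44 ≤ #(n.primeFactors.erase 2)) :
    Matchable n :=
  matchable_of_dominated hn
    (dominated_Icc_two_pow_card (fun _ => Nat.prime_of_mem_primeFactors) h)

end

theorem stmt_4 (n : ℕ) (hn : 0 < n) (hsf : Squarefree n)
    (hω : 45 ≤ n.primeFactors.card) : Matchable n :=
  stmt_4_general n hsf ((Nat.sub_le_sub_right hω 1).trans Finset.pred_card_le_card_erase)
end

section
/- Let d be a positive integer and let S be a k-AP combination all of whose constituent arithmetic progressions have common differences coprime to d. Then the number of elements of S divisible by d equals |S|/d + θ for some real number θ with |θ| ≤ k. -/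
/-- `IsAPCombination P k S` means the finite set `S` of integers is a `k`-AP combination
all of whose constituent arithmetic progressions have common difference satisfying `P`:
(1) any (possibly empty) finite arithmetic progression with common difference `q`
satisfying `P q` is a 1-AP combination; (2) a disjoint union of a `k₁`-AP combination
and a `k₂`-AP combination is a `(k₁+k₂)`-AP combination; (3) the difference of a
`k₁`-AP combination and a `k₂`-AP combination contained in it is a
`(k₁+k₂)`-AP combination. -/
inductive IsAPCombination (P : ℤ → Prop) : ℕ → Finset ℤ → Prop
  | ap (a q : ℤ) (m : ℕ) (hq : P q) :
      IsAPCombination P 1 ((Finset.range m).image (fun i : ℕ => a + (i : ℤ) * q))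
  | union {k₁ k₂ : ℕ} {S₁ S₂ : Finset ℤ} :
      IsAPCombination P k₁ S₁ → IsAPCombination P k₂ S₂ → Disjoint S₁ S₂ →
      IsAPCombination P (k₁ + k₂) (S₁ ∪ S₂)
  | sdiff {k₁ k₂ : ℕ} {S₁ S₂ : Finset ℤ} :
      IsAPCombination P k₁ S₁ → IsAPCombination P k₂ S₂ → S₂ ⊆ S₁ →
      IsAPCombination P (k₁ + k₂) (S₁ \ S₂)

/-!
The discrepancy `#{x ∈ S | d ∣ x} - #S / d` is the sum over `S` of the weight `[d ∣ x] - 1 / d`, so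
it adds up over disjoint unions and subtracts over differences of nested sets. It therefore suffices
to bound it by `1` on a progression `{a + i q | i < m}` with `q` coprime to `d`. As `q` is
invertible modulo `d`, the divisibility `d ∣ a + i q` picks out a single residue class of indices
`i`, and such a class has `⌊m / d⌋` or `⌊m / d⌋ + 1` members below `m`.
-/

/-- The arithmetic progression `a, a + q, …, a + (m - 1) q` as a set, in the form used by
`IsAPCombination.ap`; for `q = 0` its terms coincide, so it has at most one element. -/
def arithProg (a q : ℤ) (m : ℕ) : Finset ℤ :=
  (Finset.range m).image fun i : ℕ => a + (i : ℤ) * q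

theorem arithProg_index_injective (a : ℤ) {q : ℤ} (hq : q ≠ 0) :
    Function.Injective fun i : ℕ => a + (i : ℤ) * q := fun i j hij => by
  simpa [hq] using hij

theorem card_arithProg (a : ℤ) {q : ℤ} (hq : q ≠ 0) (m : ℕ) : (arithProg a q m).card = m := by
  rw [arithProg, Finset.card_image_of_injective _ (arithProg_index_injective a hq),
    Finset.card_range]

theorem card_filter_arithProg (a : ℤ) {q : ℤ} (hq : q ≠ 0) (m : ℕ) (p : ℤ → Prop)
    [DecidablePred p] :
    ((arithProg a q m).filter p).card = m.count fun i => p (a + (i : ℤ) * q) := by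
  rw [arithProg, Finset.filter_image,
    Finset.card_image_of_injective _ (arithProg_index_injective a hq),
    Nat.count_eq_card_filter_range]

theorem IsAPCombination.norm_sum_le {E : Type*} [SeminormedAddCommGroup E] {P : ℤ → Prop} {k : ℕ}
    {S : Finset ℤ} (hS : IsAPCombination P k S) {w : ℤ → E} {C : ℝ}
    (hC : ∀ (a q : ℤ) (m : ℕ), P q → ‖∑ x ∈ arithProg a q m, w x‖ ≤ C) :
    ‖∑ x ∈ S, w x‖ ≤ k * C := by
  induction hS with
  | ap a q m hq => simpa only [arithProg, Nat.cast_one, one_mul] using hC a q m hq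
  | union _ _ hdisj ih₁ ih₂ =>
    rw [Finset.sum_union hdisj, Nat.cast_add, add_mul]
    exact norm_add_le_of_le ih₁ ih₂
  | sdiff _ _ hsub ih₁ ih₂ =>
    rw [Finset.sum_sdiff_eq_sub hsub, Nat.cast_add, add_mul]
    exact norm_sub_le_of_le ih₁ ih₂

theorem sum_boole_sub_const {α R : Type*} [Ring R] (S : Finset α) (p : α → Prop) [DecidablePred p]
    (δ : R) :
    ∑ x ∈ S, ((if p x then 1 else 0) - δ) = (S.filter p).card - S.card * δ := by
  rw [Finset.sum_sub_distrib, Finset.sum_boole, Finset.sum_const, nsmul_eq_mul]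

section Residues

variable {d : ℕ} [NeZero d]

theorem exists_add_mul_modEq_iff_modEq {q : ℤ} (hq : IsCoprime q d) (a r : ℤ) :
    ∃ v : ℕ, ∀ i : ℕ, a + i * q ≡ r [ZMOD d] ↔ i ≡ v [MOD d] := by
  obtain ⟨u, hu⟩ : IsUnit (q : ZMod d) := (ZMod.coe_int_isUnit_iff_isCoprime q d).2 hq.symm
  refine ⟨((r - a) * ↑u⁻¹ : ZMod d).val, fun i => ?_⟩
  rw [← ZMod.intCast_eq_intCast_iff, ← ZMod.natCast_eq_natCast_iff, ZMod.natCast_zmod_val,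
    Units.eq_mul_inv_iff_mul_eq, eq_sub_iff_add_eq', hu]
  push_cast
  rfl

theorem abs_count_modEq_sub_div_le_one (m v : ℕ) :
    |(m.count (· ≡ v [MOD d]) : ℝ) - m / d| ≤ 1 := by
  have hfloor : ((m / d : ℕ) : ℝ) = ⌊(m / d : ℝ)⌋₊ := by rw [Nat.floor_div_eq_div]
  have hle : (⌊(m / d : ℝ)⌋₊ : ℝ) ≤ m / d := Nat.floor_le (by positivity)
  have hlt : (m / d : ℝ) < ⌊(m / d : ℝ)⌋₊ + 1 := Nat.lt_floor_add_one _
  rw [Nat.count_modEq_card m (NeZero.pos d), Nat.cast_add, hfloor, abs_le]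
  split_ifs <;> push_cast <;> constructor <;> linarith

theorem abs_card_filter_modEq_arithProg_sub_le_one {q : ℤ} (hq : IsCoprime q d) (a r : ℤ)
    (m : ℕ) :
    |(((arithProg a q m).filter (· ≡ r [ZMOD d])).card : ℝ) - (arithProg a q m).card / d| ≤ 1 := by
  rcases eq_or_ne q 0 with rfl | hq0
  · -- The terms coincide, but coprimality forces `d = 1`, where every integer is counted.
    obtain rfl : d = 1 := by
      simpa [Int.isUnit_iff_natAbs_eq] using isCoprime_zero_left.1 hq
    simp [Int.modEq_one]
  · obtain ⟨v, hv⟩ := exists_add_mul_modEq_iff_modEq hq a r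
    rw [card_filter_arithProg a hq0, card_arithProg a hq0]
    simpa only [hv] using abs_count_modEq_sub_div_le_one m v

theorem IsAPCombination.abs_card_filter_modEq_sub_le {k : ℕ} {S : Finset ℤ}
    (hS : IsAPCombination (fun q => IsCoprime q (d : ℤ)) k S) (r : ℤ) :
    |((S.filter (· ≡ r [ZMOD d])).card : ℝ) - S.card / d| ≤ k := by
  have hsum := hS.norm_sum_le (w := fun x => (if x ≡ r [ZMOD d] then 1 else 0) - (d : ℝ)⁻¹)
    (C := 1) fun a q m hq => by
      rw [sum_boole_sub_const, ← div_eq_mul_inv]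
      exact abs_card_filter_modEq_arithProg_sub_le_one hq a r m
  rwa [sum_boole_sub_const, ← div_eq_mul_inv, mul_one] at hsum

end Residues

theorem stmt_5 (d : ℕ) (hd : 0 < d) (k : ℕ) (S : Finset ℤ)
    (hS : IsAPCombination (fun q => IsCoprime q (d : ℤ)) k S) :
    ∃ θ : ℝ, |θ| ≤ (k : ℝ) ∧
      ((S.filter (fun x => (d : ℤ) ∣ x)).card : ℝ) = (S.card : ℝ) / (d : ℝ) + θ := by
  have : NeZero d := ⟨hd.ne'⟩
  refine ⟨_, ?_, (add_sub_cancel _ _).symm⟩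
  simpa only [Int.modEq_zero_iff_dvd] using hS.abs_card_filter_modEq_sub_le 0
end

section
/- Let p₁ < p₂ < ⋯ < p_j be primes with p₁ = 2, set m = p₁p₂⋯p_j, and let I be an interval of L consecutive positive integers where 2^j divides L and L ≥ 4^j. Then I can be partitioned into 2^j sets A_v of size L/2^j, indexed by the divisors v of m, such that every element of A_v is coprime to v, and such that for every divisor v of m and every positive integer d coprime to m, the number of elements of A_v divisible by d differs from L/(d·2^j) by at most 2^{j−1}. -/
/-!
The parts are the fibres of a labelling of the interval by divisors of `m`, built one prime at a
time. For `m = 2` the labels are `1` on even and `2` on odd numbers. To add an odd prime `p`, each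
fibre `X` is cut at a position `t`: the elements of `X` below `t` that are not divisible by `p` have
their label multiplied by `p`, the others keep it. Some `t` makes the two pieces equally large,
because at most half of the elements of `X` are divisible by `p`.

The multiples of `d` stay controlled because, inside a fibre and for any cofactor `e`, a proportion
`1 / d` of the multiples of `e` in any interval are multiples of `d * e`, up to an error `k`. For
the parity classes `k = 1`: the multiples of `e` in a residue class form an arithmetic progression,
every `d`-th term of which is a multiple of `d * e`. In each piece of a cut fibre, multiples are
counted by a sum or difference of two counts in `X`: multiples of `e` in one interval and multiples
of `e * p` in another. So adding a prime doubles `k`.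
-/

section

open Finset

/-! ### Multiples in residue classes -/

lemma abs_card_Ico_filter_modEq_sub_div_le_one (a b v : ℕ) {d : ℕ} (hd : 0 < d) :
    |(#{x ∈ Ico a b | x ≡ v [MOD d]} : ℝ) - #(Ico a b) / d| ≤ 1 := by
  rcases le_total b a with hba | hab
  · simp [Ico_eq_empty_of_le hba]
  have hmono : ((a : ℚ) - v) / d ≤ (b - v) / d := by gcongr
  have hcount : (#{x ∈ Ico a b | x ≡ v [MOD d]} : ℤ) = ⌈(b - v : ℚ) / d⌉ - ⌈(a - v : ℚ) / d⌉ := by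
    rw [Nat.Ico_filter_modEq_card a b hd, max_eq_left (sub_nonneg.2 (Int.ceil_mono hmono))]
  have hlength : (#(Ico a b) : ℚ) / d = (b - v) / d - (a - v) / d := by
    rw [Nat.card_Ico, Nat.cast_sub hab, ← sub_div, sub_sub_sub_cancel_right]
  have habs : |(#{x ∈ Ico a b | x ≡ v [MOD d]} : ℚ) - #(Ico a b) / d| ≤ 1 := by
    rw [hlength, ← Int.cast_natCast, hcount, Int.cast_sub, abs_le]
    constructor <;>
      linarith [Int.le_ceil ((b - v : ℚ) / d), Int.ceil_lt_add_one ((b - v : ℚ) / d),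
        Int.le_ceil ((a - v : ℚ) / d), Int.ceil_lt_add_one ((a - v : ℚ) / d)]
  simpa only [Rat.cast_abs, Rat.cast_sub, Rat.cast_div, Rat.cast_natCast, Rat.cast_one] using
    (Rat.cast_le (K := ℝ)).2 habs

lemma exists_lt_forall_mul_eq_iff_modEq {a n : ℕ} (hn : 0 < n) (ha : a.Coprime n) (b : ZMod n) :
    ∃ c < n, ∀ y : ℕ, (a * y : ZMod n) = b ↔ y ≡ c [MOD n] := by
  have : NeZero n := ⟨hn.ne'⟩
  have hinv : (a : ZMod n) * (a : ZMod n)⁻¹ = 1 := ZMod.coe_mul_inv_eq_one a ha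
  refine ⟨((a : ZMod n)⁻¹ * b).val, ZMod.val_lt _, fun y ↦ ?_⟩
  rw [← ZMod.natCast_eq_natCast_iff, ZMod.natCast_zmod_val]
  constructor
  · rintro rfl
    linear_combination -(y : ZMod n) * hinv
  · rintro h
    rw [h]
    linear_combination b * hinv

lemma abs_card_Ico_filter_dvd_add_mul_sub_div_le_one (u w c : ℕ) {d n : ℕ} (hd : 0 < d)
    (hnd : n.Coprime d) :
    |(#{i ∈ Ico u w | d ∣ c + n * i} : ℝ) - #(Ico u w) / d| ≤ 1 := by
  obtain ⟨v, -, hv⟩ := exists_lt_forall_mul_eq_iff_modEq hd hnd (-c)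
  have hdvd (i : ℕ) : d ∣ c + n * i ↔ i ≡ v [MOD d] := by
    rw [← hv, ← ZMod.natCast_eq_zero_iff, Nat.cast_add, Nat.cast_mul, add_comm,
      add_eq_zero_iff_eq_neg]
  simp only [hdvd]
  exact abs_card_Ico_filter_modEq_sub_div_le_one u w v hd

lemma exists_forall_modEq_and_dvd_iff {n e : ℕ} (hn : 0 < n) (hen : e.Coprime n) (r : ℕ) :
    ∃ c, ∀ x, x ≡ r [MOD n] ∧ e ∣ x ↔ ∃ i, x = e * (c + n * i) := by
  obtain ⟨c, hcn, hc⟩ := exists_lt_forall_mul_eq_iff_modEq hn hen (r : ZMod n)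
  have hmul (y : ℕ) : e * y ≡ r [MOD n] ↔ y ≡ c [MOD n] := by
    rw [← hc, ← ZMod.natCast_eq_natCast_iff, Nat.cast_mul]
  refine ⟨c, fun x ↦ ⟨?_, ?_⟩⟩
  · rintro ⟨hxr, y, rfl⟩
    have hyc : y % n = c := Nat.mod_eq_of_modEq ((hmul y).1 hxr) hcn
    exact ⟨y / n, by rw [← hyc, Nat.mod_add_div]⟩
  · rintro ⟨i, rfl⟩
    exact ⟨(hmul _).2 (by simp [Nat.ModEq]), dvd_mul_right ..⟩

/-- The number of multiples of `q` among the elements of `X` in the interval `[s, t)`. -/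
def countMultiples (X : Finset ℕ) (s t q : ℕ) : ℕ := #{x ∈ X | (s ≤ x ∧ x < t) ∧ q ∣ x}

lemma exists_countMultiples_residueClass (a b s t r : ℕ) {n e : ℕ} (hn : 0 < n) (he : 0 < e)
    (hen : e.Coprime n) :
    ∃ c u w, ∀ d, countMultiples {x ∈ Ico a b | x ≡ r [MOD n]} s t (d * e) =
      #{i ∈ Ico u w | d ∣ c + n * i} := by
  obtain ⟨c, hc⟩ := exists_forall_modEq_and_dvd_iff hn hen r
  let index (y : ℕ) : ℕ := ((y ⌈/⌉ e) - c) ⌈/⌉ n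
  have index_le (y i : ℕ) : index y ≤ i ↔ y ≤ e * (c + n * i) := by
    rw [ceilDiv_le_iff_le_mul hn, Nat.sub_le_iff_le_add', ceilDiv_le_iff_le_mul he]
  have lt_index (y i : ℕ) : i < index y ↔ e * (c + n * i) < y := by
    rw [← not_le, index_le, not_le]
  have hinj : Function.Injective fun i ↦ e * (c + n * i) := fun i i' h ↦ by
    simpa [he.ne', hn.ne'] using h
  refine ⟨c, index (max a s), index (min b t), fun d ↦ ?_⟩
  rw [countMultiples, ← card_image_of_injective {i ∈ Ico _ _ | d ∣ c + n * i} hinj]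
  congr 1
  ext x
  simp only [mem_filter, mem_Ico, mem_image, index_le, lt_index, max_le_iff, lt_min_iff]
  constructor
  · rintro ⟨⟨hab, hxr⟩, hst, hdvd⟩
    obtain ⟨i, rfl⟩ := (hc x).1 ⟨hxr, dvd_of_mul_left_dvd hdvd⟩
    rw [mul_comm d, Nat.mul_dvd_mul_iff_left he] at hdvd
    exact ⟨i, ⟨⟨⟨hab.1, hst.1⟩, hab.2, hst.2⟩, hdvd⟩, rfl⟩
  · rintro ⟨i, ⟨⟨hlo, hhi⟩, hdvd⟩, rfl⟩
    refine ⟨⟨⟨hlo.1, hhi.1⟩, ((hc _).2 ⟨i, rfl⟩).1⟩, ⟨hlo.2, hhi.2⟩, ?_⟩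
    rw [mul_comm d]
    exact Nat.mul_dvd_mul_left e hdvd

/-- In every interval, the multiples of `d * e` in `X` are a proportion `1 / d` of the multiples of
`e` in `X`, up to an error `k`, for all `d` and `e` coprime to `m`. The cofactor `e` is what allows
the property to pass to the pieces of a cut of `X`. -/
def EquidistributedMultiples (m : ℕ) (k : ℝ) (X : Finset ℕ) : Prop :=
  ∀ s t d e : ℕ, 0 < d → 0 < e → d.Coprime m → e.Coprime m →
    |(countMultiples X s t (d * e) : ℝ) - countMultiples X s t e / d| ≤ k

lemma equidistributedMultiples_residueClass (a b r : ℕ) {n : ℕ} (hn : 0 < n) :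
    EquidistributedMultiples n 1 {x ∈ Ico a b | x ≡ r [MOD n]} := by
  intro s t d e hd he hdn hen
  obtain ⟨c, u, w, hcount⟩ := exists_countMultiples_residueClass a b s t r hn he hen
  have htotal := hcount 1
  simp only [one_mul, one_dvd, filter_true] at htotal
  rw [htotal, hcount]
  exact abs_card_Ico_filter_dvd_add_mul_sub_div_le_one u w c hd hdn.symm

lemma countMultiples_zero_of_subset_range {X : Finset ℕ} {b : ℕ} (hX : X ⊆ range b) (q : ℕ) :
    countMultiples X 0 b q = #{x ∈ X | q ∣ x} := by
  refine congrArg card (filter_congr fun x hx ↦ ?_)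
  simp [mem_range.1 (hX hx)]

lemma EquidistributedMultiples.abs_card_filter_dvd_sub_div_le {m d : ℕ} {k : ℝ} {X : Finset ℕ}
    (hX : EquidistributedMultiples m k X) (hd : 0 < d) (hdm : d.Coprime m) :
    |(#{x ∈ X | d ∣ x} : ℝ) - #X / d| ≤ k := by
  obtain ⟨b, hb⟩ := X.exists_nat_subset_range
  simpa [countMultiples_zero_of_subset_range hb] using
    hX 0 b d 1 hd one_pos hdm (Nat.coprime_one_left m)

/-! ### Cutting a set in two -/

/-- The elements below `t` of `X` that are not divisible by `p`: the piece of a cut whose labels are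
multiplied by `p`. -/
def lowPart (X : Finset ℕ) (p t : ℕ) : Finset ℕ := {x ∈ X | ¬ p ∣ x ∧ x < t}

/-- The complement in `X` of `lowPart X p t`: the piece of a cut whose labels are kept. -/
def highPart (X : Finset ℕ) (p t : ℕ) : Finset ℕ := {x ∈ X | ¬ (¬ p ∣ x ∧ x < t)}

lemma card_lowPart_add_card_highPart (X : Finset ℕ) (p t : ℕ) :
    #(lowPart X p t) + #(highPart X p t) = #X :=
  card_filter_add_card_filter_not _

section CutCounts

variable (X : Finset ℕ) {p q : ℕ} (s t u : ℕ)

lemma countMultiples_lowPart (hqp : q.Coprime p) :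
    countMultiples (lowPart X p t) s u q + countMultiples X s (min u t) (q * p) =
      countMultiples X s (min u t) q := by
  have hmul (x : ℕ) : q * p ∣ x ↔ q ∣ x ∧ p ∣ x :=
    ⟨fun h ↦ ⟨dvd_of_mul_right_dvd h, dvd_of_mul_left_dvd h⟩,
      fun h ↦ hqp.mul_dvd_of_dvd_of_dvd h.1 h.2⟩
  unfold countMultiples lowPart
  rw [← card_union_of_disjoint (by grind [Finset.disjoint_left])]
  congr 1
  grind

lemma countMultiples_highPart (hqp : q.Coprime p) :
    countMultiples (highPart X p t) s u q =
      countMultiples X (max s t) u q + countMultiples X s (min u t) (q * p) := by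
  have hmul (x : ℕ) : q * p ∣ x ↔ q ∣ x ∧ p ∣ x :=
    ⟨fun h ↦ ⟨dvd_of_mul_right_dvd h, dvd_of_mul_left_dvd h⟩,
      fun h ↦ hqp.mul_dvd_of_dvd_of_dvd h.1 h.2⟩
  unfold countMultiples highPart
  rw [← card_union_of_disjoint (by grind [Finset.disjoint_left])]
  congr 1
  grind

end CutCounts

namespace EquidistributedMultiples

variable {m p : ℕ} {k : ℝ} {X : Finset ℕ}

protected lemma lowPart (hX : EquidistributedMultiples m k X) (hp : 0 < p)
    (hpm : p.Coprime m) (t : ℕ) :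
    EquidistributedMultiples (m * p) (2 * k) (lowPart X p t) := by
  intro s u d e hd he hdmp hemp
  obtain ⟨hdm, hdp⟩ := Nat.coprime_mul_iff_right.1 hdmp
  obtain ⟨hem, hep⟩ := Nat.coprime_mul_iff_right.1 hemp
  have hall := hX s (min u t) d e hd he hdm hem
  have hmultiples := hX s (min u t) d (e * p) hd (by positivity) hdm (hem.mul_left hpm)
  have hcount {q : ℕ} (hqp : q.Coprime p) : (countMultiples (lowPart X p t) s u q : ℝ) =
      countMultiples X s (min u t) q - countMultiples X s (min u t) (q * p) :=
    eq_sub_of_add_eq (mod_cast countMultiples_lowPart X s t u hqp)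
  rw [hcount (hdp.mul_left hep), hcount hep, sub_div, sub_sub_sub_comm, mul_assoc d, two_mul]
  exact (abs_sub _ _).trans (add_le_add hall hmultiples)

protected lemma highPart (hX : EquidistributedMultiples m k X) (hp : 0 < p)
    (hpm : p.Coprime m) (t : ℕ) :
    EquidistributedMultiples (m * p) (2 * k) (highPart X p t) := by
  intro s u d e hd he hdmp hemp
  obtain ⟨hdm, hdp⟩ := Nat.coprime_mul_iff_right.1 hdmp
  obtain ⟨hem, hep⟩ := Nat.coprime_mul_iff_right.1 hemp
  have hall := hX (max s t) u d e hd he hdm hem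
  have hmultiples := hX s (min u t) d (e * p) hd (by positivity) hdm (hem.mul_left hpm)
  rw [countMultiples_highPart X s t u (hdp.mul_left hep), countMultiples_highPart X s t u hep,
    Nat.cast_add, Nat.cast_add, add_div, add_sub_add_comm, mul_assoc d, two_mul]
  exact (abs_add_le _ _).trans (add_le_add hall hmultiples)

end EquidistributedMultiples

lemma exists_card_filter_lt_eq {s : Finset ℕ} {n : ℕ} (hn : n ≤ #s) :
    ∃ t, #{x ∈ s | x < t} = n := by
  obtain ⟨b, hb⟩ := s.exists_nat_subset_range
  have hcount (t : ℕ) : #{x ∈ s | x < t} = t.count (· ∈ s) := by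
    rw [Nat.count_eq_card_filter_range]
    congr 1
    grind
  rcases hn.lt_or_eq with hlt | rfl
  · refine ⟨Nat.nth (· ∈ s) n, ?_⟩
    rw [hcount]
    exact Nat.count_nth fun hf ↦ by simpa using hlt
  · exact ⟨b, congrArg card (filter_true_of_mem fun x hx ↦ mem_range.1 (hb hx))⟩

lemma EquidistributedMultiples.exists_card_lowPart_eq {m N p : ℕ} {k : ℝ} {X : Finset ℕ}
    (hX : EquidistributedMultiples m k X) (hcard : #X = 2 * N) (hp : 3 ≤ p) (hpm : p.Coprime m)
    (hN : 3 * k ≤ N) : ∃ t, #(lowPart X p t) = N := by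
  have herror := (abs_le.1 (hX.abs_card_filter_dvd_sub_div_le (by omega) hpm)).2
  have hthird : (#X : ℝ) / p ≤ 2 * N / 3 := by
    rw [hcard, Nat.cast_mul, Nat.cast_two]
    gcongr
    exact_mod_cast hp
  have hmultiples : #{x ∈ X | p ∣ x} ≤ N := by
    have : (#{x ∈ X | p ∣ x} : ℝ) ≤ N := by linarith
    exact_mod_cast this
  have hsplit := card_filter_add_card_filter_not (s := X) (p ∣ ·)
  obtain ⟨t, ht⟩ := exists_card_filter_lt_eq (s := {x ∈ X | ¬ p ∣ x}) (n := N) (by omega)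
  exact ⟨t, by rwa [filter_filter] at ht⟩

/-! ### Labellings by divisors -/

/-- A labelling `f` of `I` by divisors of `m`, with labels coprime to the elements carrying them,
whose fibres have size `N` and equidistributed multiples up to an error `k`: the fibres form the
partition of the theorem. -/
structure IsBalancedLabelling (I : Finset ℕ) (m N : ℕ) (k : ℝ) (f : ℕ → ℕ) : Prop where
  dvd : ∀ x ∈ I, f x ∣ m
  coprime : ∀ x ∈ I, x.Coprime (f x)
  card_fibre : ∀ v, v ∣ m → #{x ∈ I | f x = v} = N
  equidistributed : ∀ v, v ∣ m → EquidistributedMultiples m k {x ∈ I | f x = v}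

lemma card_Ico_filter_modEq_of_length_eq_mul (a N r : ℕ) {n : ℕ} (hn : 0 < n) :
    #{x ∈ Ico a (a + n * N) | x ≡ r [MOD n]} = N := by
  have hperiodic : Function.Periodic (· ≡ r [MOD n]) (n * N) := fun x ↦ by simp [Nat.ModEq]
  rw [Nat.filter_Ico_card_eq_of_periodic a _ _ hperiodic, Nat.count_modEq_card _ hn]
  simp [hn]

lemma isBalancedLabelling_parity (a N : ℕ) :
    IsBalancedLabelling (Ico a (a + 2 * N)) 2 N 1 (fun x ↦ x % 2 + 1) := by
  have hfibre {v : ℕ} (hv : v ∣ 2) :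
      {x ∈ Ico a (a + 2 * N) | x % 2 + 1 = v} = {x ∈ Ico a (a + 2 * N) | x ≡ v - 1 [MOD 2]} := by
    have hv12 := (Nat.dvd_prime Nat.prime_two).1 hv
    refine filter_congr fun x _ ↦ ?_
    unfold Nat.ModEq
    omega
  refine ⟨fun x _ ↦ ?_, fun x _ ↦ ?_, fun v hv ↦ ?_, fun v hv ↦ ?_⟩
  · rcases Nat.mod_two_eq_zero_or_one x with h | h <;> simp [h]
  · rcases Nat.mod_two_eq_zero_or_one x with h | h
    · simp [h]
    · simpa [h] using Nat.odd_iff.2 h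
  · rw [hfibre hv]
    exact card_Ico_filter_modEq_of_length_eq_mul a N _ two_pos
  · rw [hfibre hv]
    exact equidistributedMultiples_residueClass _ _ _ two_pos

/-- The labelling obtained from `f` by cutting the fibre over each `v` at `t v` and multiplying by
`p` the labels on its low part. -/
def cutLabelling (f : ℕ → ℕ) (p : ℕ) (t : ℕ → ℕ) (x : ℕ) : ℕ :=
  if ¬ p ∣ x ∧ x < t (f x) then f x * p else f x

section CutFibres

variable {I : Finset ℕ} {f : ℕ → ℕ} {p v : ℕ} (t : ℕ → ℕ)

lemma filter_cutLabelling_eq_mul (hp : 0 < p) (hpf : ∀ x ∈ I, ¬ p ∣ f x) :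
    {x ∈ I | cutLabelling f p t x = v * p} = lowPart {x ∈ I | f x = v} p (t v) := by
  rw [lowPart, filter_filter]
  refine filter_congr fun x hx ↦ ?_
  have hne : f x ≠ v * p := fun h ↦ hpf x hx (h ▸ dvd_mul_left p v)
  have hcancel : f x * p = v * p ↔ f x = v := Nat.mul_left_inj hp.ne'
  unfold cutLabelling
  grind

lemma filter_cutLabelling_eq (hpv : ¬ p ∣ v) :
    {x ∈ I | cutLabelling f p t x = v} = highPart {x ∈ I | f x = v} p (t v) := by
  rw [highPart, filter_filter]
  refine filter_congr fun x _ ↦ ?_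
  have hne : f x * p ≠ v := fun h ↦ hpv (h ▸ dvd_mul_left p (f x))
  unfold cutLabelling
  grind

end CutFibres

namespace IsBalancedLabelling

variable {I : Finset ℕ} {m N p : ℕ} {k : ℝ} {f : ℕ → ℕ}

protected lemma cutLabelling (hf : IsBalancedLabelling I m (2 * N) k f) (hp : p.Prime)
    (hpm : p.Coprime m) {t : ℕ → ℕ} (ht : ∀ v, v ∣ m → #(lowPart {x ∈ I | f x = v} p (t v)) = N) :
    IsBalancedLabelling I (m * p) N (2 * k) (cutLabelling f p t) := by
  have hpf (x) (hx : x ∈ I) : ¬ p ∣ f x := fun h ↦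
    hp.coprime_iff_not_dvd.1 hpm (h.trans (hf.dvd x hx))
  have hfibre (v) (hv : v ∣ m * p) :
      #{x ∈ I | cutLabelling f p t x = v} = N ∧
        EquidistributedMultiples (m * p) (2 * k) {x ∈ I | cutLabelling f p t x = v} := by
    by_cases hpv : p ∣ v
    · obtain ⟨w, rfl⟩ := hpv
      rw [mul_comm p w] at hv ⊢
      have hw : w ∣ m := Nat.dvd_of_mul_dvd_mul_right hp.pos hv
      rw [filter_cutLabelling_eq_mul t hp.pos hpf]
      exact ⟨ht w hw, (hf.equidistributed w hw).lowPart hp.pos hpm _⟩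
    · have hvm : v ∣ m := (hp.coprime_iff_not_dvd.2 hpv).symm.dvd_of_dvd_mul_right hv
      rw [filter_cutLabelling_eq t hpv]
      refine ⟨?_, (hf.equidistributed v hvm).highPart hp.pos hpm _⟩
      have hsum := card_lowPart_add_card_highPart {x ∈ I | f x = v} p (t v)
      rw [ht v hvm, hf.card_fibre v hvm] at hsum
      omega
  refine ⟨fun x hx ↦ ?_, fun x hx ↦ ?_, fun v hv ↦ (hfibre v hv).1, fun v hv ↦ (hfibre v hv).2⟩
  · unfold cutLabelling
    split_ifs
    · exact Nat.mul_dvd_mul_right (hf.dvd x hx) p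
    · exact (hf.dvd x hx).mul_right p
  · unfold cutLabelling
    split_ifs with hcut
    · exact (hf.coprime x hx).mul_right (hp.coprime_iff_not_dvd.2 hcut.1).symm
    · exact hf.coprime x hx

lemma exists_mul_prime (hf : IsBalancedLabelling I m (2 * N) k f) (hp : p.Prime) (hp2 : p ≠ 2)
    (hpm : p.Coprime m) (hN : 3 * k ≤ N) :
    ∃ g, IsBalancedLabelling I (m * p) N (2 * k) g := by
  have hp3 : 3 ≤ p := by have := hp.two_le; omega
  choose! t ht using fun v (hv : v ∣ m) ↦
    (hf.equidistributed v hv).exists_card_lowPart_eq (hf.card_fibre v hv) hp3 hpm hN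
  exact ⟨_, hf.cutLabelling hp hpm ht⟩

lemma abs_card_fibre_filter_dvd_sub_le (hf : IsBalancedLabelling I m N k f) {v d : ℕ}
    (hv : v ∣ m) (hd : 0 < d) (hdm : d.Coprime m) :
    |(#{x ∈ {x ∈ I | f x = v} | d ∣ x} : ℝ) - N / d| ≤ k := by
  simpa only [hf.card_fibre v hv] using
    (hf.equidistributed v hv).abs_card_filter_dvd_sub_div_le hd hdm

end IsBalancedLabelling

lemma exists_isBalancedLabelling_two_mul_prod (a : ℕ) {T : Finset ℕ}
    (hT : ∀ p ∈ T, p.Prime ∧ p ≠ 2) {N : ℕ} (hN : 3 * 2 ^ #T ≤ 2 * N) :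
    ∃ f, IsBalancedLabelling (Ico a (a + 2 ^ (#T + 1) * N)) (2 * ∏ p ∈ T, p) N (2 ^ #T) f := by
  induction T using Finset.induction_on generalizing N with
  | empty => exact ⟨_, by simpa using isBalancedLabelling_parity a N⟩
  | insert p T hpT ih =>
    obtain ⟨⟨hp, hp2⟩, hT'⟩ := forall_mem_insert .. |>.1 hT
    rw [card_insert_of_notMem hpT, pow_succ] at hN
    obtain ⟨f, hf⟩ := ih hT' (N := 2 * N) (by omega)
    have hpm : p.Coprime (2 * ∏ q ∈ T, q) := by
      refine ((Nat.coprime_primes hp Nat.prime_two).2 hp2).mul_right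
        (Nat.Coprime.prod_right fun q hq ↦ (Nat.coprime_primes hp (hT' q hq).1).2 ?_)
      rintro rfl
      exact hpT hq
    have hlarge : 3 * (2 : ℝ) ^ #T ≤ N := by
      have : 3 * 2 ^ #T ≤ N := by omega
      exact_mod_cast this
    obtain ⟨g, hg⟩ := hf.exists_mul_prime hp hp2 hpm hlarge
    refine ⟨g, ?_⟩
    rw [card_insert_of_notMem hpT, prod_insert hpT, pow_succ 2 (#T + 1), pow_succ' (2 : ℝ),
      mul_assoc (2 ^ (#T + 1)), mul_comm p, ← mul_assoc 2 _ p]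
    exact hg

lemma exists_isBalancedLabelling_prod (a : ℕ) {P : Finset ℕ} (hP : ∀ p ∈ P, p.Prime)
    (h2 : 2 ∈ P) {N : ℕ} (hN : 2 ^ #P ≤ N) :
    ∃ f, IsBalancedLabelling (Ico a (a + 2 ^ #P * N)) (∏ p ∈ P, p) N (2 ^ (#P - 1)) f := by
  have hodd : ∀ p ∈ P.erase 2, p.Prime ∧ p ≠ 2 := fun p hp ↦
    ⟨hP p (mem_of_mem_erase hp), ne_of_mem_erase hp⟩
  have hcard := card_erase_add_one h2
  rw [← hcard, pow_succ] at hN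
  obtain ⟨f, hf⟩ := exists_isBalancedLabelling_two_mul_prod a hodd (N := N) (by omega)
  refine ⟨f, ?_⟩
  rwa [hcard, mul_prod_erase P (fun p ↦ p) h2, card_erase_of_mem h2] at hf

end

theorem stmt_6 (j : ℕ) (hj : 0 < j) (p : Fin j → ℕ)
    (hprime : ∀ i, (p i).Prime) (hmono : StrictMono p) (hp0 : p ⟨0, hj⟩ = 2)
    (L a : ℕ) (ha : 0 < a) (hLdvd : 2 ^ j ∣ L) (hL : 4 ^ j ≤ L) :
    ∃ A : ℕ → Finset ℕ,
      -- the sets `A v`, for `v` a divisor of `m = p₁⋯p_j`, partition the interval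
      ((∏ i, p i).divisors).biUnion A = Finset.Ico a (a + L) ∧
      ((((∏ i, p i).divisors) : Set ℕ)).PairwiseDisjoint A ∧
      -- each part has size `L / 2^j`
      (∀ v ∈ (∏ i, p i).divisors, (A v).card = L / 2 ^ j) ∧
      -- every element of `A v` is coprime to `v`
      (∀ v ∈ (∏ i, p i).divisors, ∀ x ∈ A v, Nat.Coprime x v) ∧
      -- divisibility counts: for `d` coprime to `m`, the number of elements of `A v`
      -- divisible by `d` differs from `L/(d·2^j)` by at most `2^{j-1}`
      (∀ v ∈ (∏ i, p i).divisors, ∀ d : ℕ, 0 < d → Nat.Coprime d (∏ i, p i) →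
        |(((A v).filter (fun x => d ∣ x)).card : ℝ) - (L : ℝ) / ((d : ℝ) * 2 ^ j)|
          ≤ 2 ^ (j - 1)) := by
  have hm : ∏ i, p i ≠ 0 := Finset.prod_ne_zero_iff.2 fun i _ ↦ (hprime i).ne_zero
  obtain ⟨N, rfl⟩ := hLdvd
  have hN : 2 ^ j ≤ N :=
    Nat.le_of_mul_le_mul_left (by rwa [← mul_pow]) (pow_pos two_pos j)
  obtain ⟨f, hf⟩ : ∃ f, IsBalancedLabelling (Finset.Ico a (a + 2 ^ j * N)) (∏ i, p i) N
      (2 ^ (j - 1)) f := by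
    let P : Finset ℕ := Finset.univ.map ⟨p, hmono.injective⟩
    simpa [P] using exists_isBalancedLabelling_prod a (P := P) (N := N)
      (by simpa [P] using hprime) (by simpa [P] using ⟨_, hp0⟩) (by simpa [P] using hN)
  refine ⟨fun v ↦ {x ∈ Finset.Ico a (a + 2 ^ j * N) | f x = v}, ?_, ?_, ?_, ?_, ?_⟩
  · exact Finset.biUnion_filter_eq_of_maps_to fun x hx ↦ Nat.mem_divisors.2 ⟨hf.dvd x hx, hm⟩
  · exact Set.pairwiseDisjoint_filter f _ _
  · intro v hv
    rw [hf.card_fibre v (Nat.dvd_of_mem_divisors hv), Nat.mul_div_cancel_left _ (by positivity)]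
  · rintro v - x hx
    obtain ⟨hxI, rfl⟩ := Finset.mem_filter.1 hx
    exact hf.coprime x hxI
  · intro v hv d hd hdm
    rw [Nat.cast_mul, Nat.cast_pow, Nat.cast_two, mul_comm (d : ℝ),
      mul_div_mul_left _ _ (by positivity)]
    exact hf.abs_card_fibre_filter_dvd_sub_le (Nat.dvd_of_mem_divisors hv) hd hdm
end
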